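/- arXiv:2306.07156 — 5 statements merged into one kernel-verified Lean document; each statement's English description precedes it below -/
import Mathlib

section
/- There is an absolute constant C > 0 such that for every odd prime p and every integer 0 \le k \le p-1, one has \sup_{t\in(0,1)} |\partial_t \widetilde{H}_p(k,t) - \partial_t H_p(k,t)| \le C/p and \sup_{t\in(0,1)} |\partial_t^2 \widetilde{H}_p(k,t) - \partial_t^2 H_p(k,t)| \le C/p^2. -/
open MeasureTheory Filter

noncomputable section

open scoped Classical

/-- `e(t) = e^{2π i t}`. -/
def e2 (t : ℝ) : ℂ := Complex.exp (2 * Real.pi * Complex.I * t)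

/-- The summand `(e(t)-1)/(2π i (m-t))` of the random Fekete process, with the
removable singularity at `t = m` filled in by its limiting value `-1`. -/
def coefG (m : ℤ) (t : ℝ) : ℂ :=
  if t = (m : ℝ) then -1 else (e2 t - 1) / (2 * Real.pi * Complex.I * ((m : ℂ) - (t : ℂ)))

/-- Symmetric partial sums `∑_{|m| ≤ M} (e(t)-1)/(2π i (m-t)) X(m)`. -/
def partialG {Ω : Type} (X : ℤ → Ω → ℝ) (M : ℕ) (ω : Ω) (t : ℝ) : ℂ :=
  ∑ m ∈ Finset.Icc (-(M : ℤ)) (M : ℤ), coefG m t * (X m ω : ℂ)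

/-- The random process `G_X(t)`, the limit of the symmetric partial sums. -/
def GX {Ω : Type} (X : ℤ → Ω → ℝ) (ω : Ω) (t : ℝ) : ℂ :=
  limUnder Filter.atTop (fun M : ℕ => partialG X M ω t)

/-- The Fekete polynomial `F_p(z) = ∑_{n=1}^{p-1} (n/p) z^n` (Legendre symbol coefficients). -/
def feketePoly (p : ℕ) (z : ℂ) : ℂ := ∑ n ∈ Finset.Ico 1 p, (jacobiSym (n : ℤ) p : ℂ) * z ^ n

/-- `G_p(k,t) = F_p(e((k+t)/p)) / F_p(ζ_p)`. -/
def GpFun (p k : ℕ) (t : ℝ) : ℂ :=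
  feketePoly p (e2 (((k : ℝ) + t) / (p : ℝ))) / feketePoly p (e2 (1 / (p : ℝ)))

/-- The filter of natural numbers tending to infinity along the primes. -/
def primesAtTop : Filter ℕ := Filter.atTop ⊓ Filter.principal {p : ℕ | p.Prime}

end

noncomputable section

/-- `H_p(k,t) = ∑_{|m| ≤ (p-1)/2} ((k-m)/p) · 2πi/(p(e((m-t)/p)-1))`. -/
def Hp (p k : ℕ) (t : ℝ) : ℂ :=
  ∑ m ∈ Finset.Icc (-(((p : ℤ) - 1) / 2)) (((p : ℤ) - 1) / 2),
    (jacobiSym ((k : ℤ) - m) p : ℂ) * (2 * Real.pi * Complex.I) /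
      ((p : ℂ) * (e2 (((m : ℝ) - t) / (p : ℝ)) - 1))

/-- `H̃_p(k,t) = ∑_{|m| ≤ (p-1)/2} ((k-m)/p) · 1/(m-t)`. -/
def tildeHp (p k : ℕ) (t : ℝ) : ℂ :=
  ∑ m ∈ Finset.Icc (-(((p : ℤ) - 1) / 2)) (((p : ℤ) - 1) / 2),
    (jacobiSym ((k : ℤ) - m) p : ℂ) * (1 / ((m : ℂ) - (t : ℂ)))

theorem exists_phi : ∃ Φ : ℂ → ℂ, ∃ U : Set ℂ, IsOpen U ∧ DifferentiableOn ℂ Φ U ∧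
    (∀ x : ℝ, |x| ≤ 2 / 3 → (x : ℂ) ∈ U) ∧
    ∀ x : ℝ, |x| ≤ 2 / 3 → x ≠ 0 →
      e2 x - 1 ≠ 0 ∧ Φ x = 1 / (x : ℂ) - 2 * Real.pi * Complex.I / (e2 x - 1) := by
  have hpi : (2 * Real.pi * Complex.I : ℂ) ≠ 0 := Complex.two_pi_I_ne_zero
  let f : ℂ → ℂ := fun z => Complex.exp (2 * Real.pi * Complex.I * z)
  have hf : Differentiable ℂ f := by
    intro z; fun_prop
  let g := dslope f 0
  have hg : Differentiable ℂ g := by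
    rw [← differentiableOn_univ]
    exact (Complex.differentiableOn_dslope Filter.univ_mem).2 hf.differentiableOn
  let h := dslope g 0
  have hh : Differentiable ℂ h := by
    rw [← differentiableOn_univ]
    exact (Complex.differentiableOn_dslope Filter.univ_mem).2 hg.differentiableOn
  have hg0 : g 0 = 2 * Real.pi * Complex.I := by
    have : HasDerivAt f (2 * Real.pi * Complex.I) 0 := by
      have := ((hasDerivAt_id (0 : ℂ)).const_mul (2 * Real.pi * Complex.I : ℂ)).cexp
      simpa using this
    simp only [g, dslope_same, this.deriv]
  have hgz : ∀ z, z ≠ 0 → g z = (f z - 1) / z := by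
    intro z hz
    simp only [g]
    rw [dslope_of_ne _ hz, slope_def_field]
    simp [f]
  have hhz : ∀ z, z ≠ 0 → h z = (g z - 2 * Real.pi * Complex.I) / z := by
    intro z hz
    simp only [h]
    rw [dslope_of_ne _ hz, slope_def_field, hg0, sub_zero]
  have key : ∀ x : ℝ, |x| ≤ 2 / 3 → x ≠ 0 → f x - 1 ≠ 0 := by
    intro x hx hx0 h1
    rw [sub_eq_zero, Complex.exp_eq_one_iff] at h1
    obtain ⟨n, hn⟩ := h1
    have h2 : (x : ℂ) = n := by
      apply mul_left_cancel₀ hpi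
      rw [hn]; ring
    have h3 : x = n := by exact_mod_cast h2
    rw [abs_le] at hx
    have h4 : (-1 : ℝ) < n := by rw [← h3]; linarith
    have h5 : (n : ℝ) < 1 := by rw [← h3]; linarith
    have h6 : (-1 : ℤ) < n := by exact_mod_cast h4
    have h7 : n < 1 := by exact_mod_cast h5
    have : n = 0 := by omega
    apply hx0; rw [h3, this]; simp
  refine ⟨fun z => h z / g z, {z | g z ≠ 0}, isOpen_ne_fun hg.continuous continuous_const, ?_, ?_, ?_⟩
  · intro z hz
    exact ((hh z).div (hg z) hz).differentiableWithinAt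
  · intro x hx
    show g x ≠ 0
    by_cases hx0 : x = 0
    · subst hx0; rw [Complex.ofReal_zero, hg0]; exact hpi
    · have hc : (x : ℂ) ≠ 0 := by exact_mod_cast hx0
      rw [hgz _ hc]
      exact div_ne_zero (key x hx hx0) hc
  · intro x hx hx0
    have hc : (x : ℂ) ≠ 0 := by exact_mod_cast hx0
    have hk := key x hx hx0
    refine ⟨hk, ?_⟩
    show h x / g x = 1 / (x : ℂ) - 2 * Real.pi * Complex.I / (f x - 1)
    rw [hhz _ hc, hgz _ hc]
    field_simp

theorem derivs_of_sum (F G S T1 T2 S1 S2 : ℝ → ℂ)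
    (hFG : ∀ t ∈ Set.Ioo (0 : ℝ) 1, F t - G t = S t)
    (hT1 : ∀ t ∈ Set.Ioo (0 : ℝ) 1, HasDerivAt F (T1 t) t)
    (hT2 : ∀ t ∈ Set.Ioo (0 : ℝ) 1, HasDerivAt T1 (T2 t) t)
    (hS1 : ∀ t ∈ Set.Ioo (0 : ℝ) 1, HasDerivAt S (S1 t) t)
    (hS2 : ∀ t ∈ Set.Ioo (0 : ℝ) 1, HasDerivAt S1 (S2 t) t) :
    ∀ t ∈ Set.Ioo (0 : ℝ) 1, deriv F t - deriv G t = S1 t ∧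
      deriv (deriv F) t - deriv (deriv G) t = S2 t := by
  have hn : ∀ t ∈ Set.Ioo (0 : ℝ) 1, Set.Ioo (0 : ℝ) 1 ∈ nhds t :=
    fun t ht => isOpen_Ioo.mem_nhds ht
  have hG : ∀ t ∈ Set.Ioo (0 : ℝ) 1, deriv G t = T1 t - S1 t := by
    intro t ht
    refine HasDerivAt.deriv (((hT1 t ht).sub (hS1 t ht)).congr_of_eventuallyEq ?_)
    filter_upwards [hn t ht] with s hs
    rw [Pi.sub_apply, ← hFG s hs]; ring
  have hF : ∀ t ∈ Set.Ioo (0 : ℝ) 1, deriv F t = T1 t := fun t ht => (hT1 t ht).deriv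
  intro t ht
  refine ⟨by rw [hG t ht, hF t ht]; ring, ?_⟩
  have h1 : deriv (deriv F) t = T2 t := by
    refine HasDerivAt.deriv ((hT2 t ht).congr_of_eventuallyEq ?_)
    filter_upwards [hn t ht] with s hs using hF s hs
  have h2 : deriv (deriv G) t = T2 t - S2 t := by
    refine HasDerivAt.deriv (((hT2 t ht).sub (hS2 t ht)).congr_of_eventuallyEq ?_)
    filter_upwards [hn t ht] with s hs using hG s hs
  rw [h1, h2]; ring

theorem jacobi_norm_le (a : ℤ) (p : ℕ) : ‖(jacobiSym a p : ℂ)‖ ≤ 1 := by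
  rcases jacobiSym.trichotomy a p with h | h | h <;> rw [h] <;> simp

/-- `H̃_p(k,·)` and `H_p(k,·)` are close in `C²`-topology on `(0,1)`:
`‖H̃_p'(k,t) - H_p'(k,t)‖ ≤ C/p` and `‖H̃_p''(k,t) - H_p''(k,t)‖ ≤ C/p²` uniformly in `t`. -/
theorem derivatives_Hp_close :
    ∃ C : ℝ, 0 < C ∧ ∀ p : ℕ, p.Prime → Odd p → ∀ k : ℕ, k ≤ p - 1 →
      ∀ t ∈ Set.Ioo (0 : ℝ) 1,
        ‖deriv (tildeHp p k) t - deriv (Hp p k) t‖ ≤ C / p ∧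
        ‖deriv (deriv (tildeHp p k)) t - deriv (deriv (Hp p k)) t‖ ≤ C / (p : ℝ) ^ 2 := by
  obtain ⟨Φ, U, hU, hΦ, hmem, hval⟩ := exists_phi
  have hΦ1 := hΦ.deriv hU
  have hΦ2 := hΦ1.deriv hU
  have hcomp : IsCompact ((fun x : ℝ => (x : ℂ)) '' Set.Icc (-(2 / 3)) (2 / 3)) :=
    isCompact_Icc.image Complex.continuous_ofReal
  have hsub : ((fun x : ℝ => (x : ℂ)) '' Set.Icc (-(2 / 3)) (2 / 3)) ⊆ U := by
    rintro _ ⟨x, hx, rfl⟩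
    exact hmem x (abs_le.2 hx)
  obtain ⟨A, hA⟩ := hcomp.exists_bound_of_continuousOn (hΦ1.continuousOn.mono hsub)
  obtain ⟨B, hB⟩ := hcomp.exists_bound_of_continuousOn (hΦ2.continuousOn.mono hsub)
  have hA' : ∀ x : ℝ, |x| ≤ 2 / 3 → ‖deriv Φ x‖ ≤ A :=
    fun x hx => hA _ ⟨x, abs_le.1 hx, rfl⟩
  have hB' : ∀ x : ℝ, |x| ≤ 2 / 3 → ‖deriv (deriv Φ) x‖ ≤ B :=
    fun x hx => hB _ ⟨x, abs_le.1 hx, rfl⟩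
  refine ⟨max (max A B) 1, lt_of_lt_of_le one_pos (le_max_right _ _), ?_⟩
  intro p hp hodd k _
  have hp3 : 3 ≤ p := by
    have := hp.two_le
    obtain ⟨r, hr⟩ := hodd
    omega
  have hp3' : (3 : ℝ) ≤ p := by exact_mod_cast hp3
  have hp0 : (p : ℝ) ≠ 0 := by positivity
  have hpc : (p : ℂ) ≠ 0 := by exact_mod_cast hp0
  set I := Finset.Icc (-(((p : ℤ) - 1) / 2)) (((p : ℤ) - 1) / 2) with hI
  have hcard : (I.card : ℝ) ≤ p := by
    have : I.card ≤ p := by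
      rw [hI, Int.card_Icc]; omega
    exact_mod_cast this
  have hx : ∀ m ∈ I, ∀ t ∈ Set.Ioo (0 : ℝ) 1,
      |((m : ℝ) - t) / p| ≤ 2 / 3 ∧ (m : ℝ) - t ≠ 0 := by
    intro m hm t ht
    rw [hI, Finset.mem_Icc] at hm
    constructor
    · have h1 : 2 * m ≤ (p : ℤ) - 1 := by omega
      have h2 : -((p : ℤ) - 1) ≤ 2 * m := by omega
      have h1' : 2 * (m : ℝ) ≤ (p : ℝ) - 1 := by exact_mod_cast h1
      have h2' : -((p : ℝ) - 1) ≤ 2 * (m : ℝ) := by exact_mod_cast h2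
      rw [abs_div, Nat.abs_cast, div_le_iff₀ (by positivity), abs_le]
      constructor <;> linarith [ht.1, ht.2]
    · intro h
      have h3 : (0 : ℝ) < m := by linarith [ht.1]
      have h4 : (m : ℝ) < 1 := by linarith [ht.2]
      have h5 : (0 : ℤ) < m := by exact_mod_cast h3
      have h6 : m < 1 := by exact_mod_cast h4
      omega
  have hlin : ∀ (m : ℤ) (t : ℝ),
      HasDerivAt (fun t : ℝ => ((m : ℂ) - (t : ℂ))) (-1) t := by
    intro m t
    simpa using (Complex.ofRealCLM.hasDerivAt (x := t)).const_sub (m : ℂ)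
  have hlinp : ∀ (m : ℤ) (t : ℝ),
      HasDerivAt (fun t : ℝ => ((((m : ℝ) - t) / p : ℝ) : ℂ)) (-1 / p) t := by
    intro m t
    have := (hlin m t).div_const (p : ℂ)
    refine this.congr_of_eventuallyEq (Filter.Eventually.of_forall fun s => ?_)
    simp
  have hchain : ∀ Ψ : ℂ → ℂ, DifferentiableOn ℂ Ψ U → ∀ m ∈ I, ∀ t ∈ Set.Ioo (0 : ℝ) 1,
      HasDerivAt (fun t : ℝ => Ψ ((((m : ℝ) - t) / p : ℝ) : ℂ))
        (deriv Ψ ((((m : ℝ) - t) / p : ℝ) : ℂ) * (-1 / p)) t := by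
    intro Ψ hΨ m hm t ht
    have hd : HasDerivAt Ψ (deriv Ψ ((((m : ℝ) - t) / p : ℝ) : ℂ)) ((((m : ℝ) - t) / p : ℝ) : ℂ) :=
      ((hΨ.differentiableAt (hU.mem_nhds (hmem _ (hx m hm t ht).1)))).hasDerivAt
    exact hd.comp t (hlinp m t)
  have main := derivs_of_sum (tildeHp p k) (Hp p k)
    (fun t => ∑ m ∈ I, (jacobiSym ((k : ℤ) - m) p : ℂ) / p * Φ ((((m : ℝ) - t) / p : ℝ) : ℂ))
    (fun t => ∑ m ∈ I, (jacobiSym ((k : ℤ) - m) p : ℂ) * (1 / ((m : ℂ) - (t : ℂ)) ^ 2))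
    (fun t => ∑ m ∈ I, (jacobiSym ((k : ℤ) - m) p : ℂ) * (2 / ((m : ℂ) - (t : ℂ)) ^ 3))
    (fun t => ∑ m ∈ I, (jacobiSym ((k : ℤ) - m) p : ℂ) / p *
      (deriv Φ ((((m : ℝ) - t) / p : ℝ) : ℂ) * (-1 / p)))
    (fun t => ∑ m ∈ I, (jacobiSym ((k : ℤ) - m) p : ℂ) / p *
      ((deriv (deriv Φ) ((((m : ℝ) - t) / p : ℝ) : ℂ) * (-1 / p)) * (-1 / p)))
    ?_ ?_ ?_ ?_ ?_
  · have hbound : ∀ (D : ℝ) (c : ℤ → ℂ), (∀ m ∈ I, ‖c m‖ ≤ D) → ‖∑ m ∈ I, c m‖ ≤ p * D := by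
      intro D c hc
      refine (norm_sum_le_of_le I hc).trans ?_
      rw [Finset.sum_const, nsmul_eq_mul]
      have hne : (0 : ℤ) ∈ I := by rw [hI, Finset.mem_Icc]; omega
      exact mul_le_mul_of_nonneg_right hcard ((norm_nonneg _).trans (hc 0 hne))
    intro t ht
    obtain ⟨h1, h2⟩ := main t ht
    set M := max (max A B) 1 with hM
    have hAM : A ≤ M := (le_max_left _ _).trans (le_max_left _ _)
    have hBM : B ≤ M := (le_max_right _ _).trans (le_max_left _ _)
    have hM0 : 0 ≤ M := zero_le_one.trans (le_max_right _ _)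
    rw [h1, h2]
    constructor
    · refine (hbound (1 / p * (M * (1 / p))) _ ?_).trans (le_of_eq (by field_simp))
      intro m hm
      rw [norm_mul, norm_mul, norm_div, norm_div, norm_neg, norm_one, Complex.norm_natCast]
      have := jacobi_norm_le (k - m) p
      have := (hA' _ (hx m hm t ht).1).trans hAM
      gcongr
    · refine (hbound (1 / p * ((M * (1 / p)) * (1 / p))) _ ?_).trans (le_of_eq (by field_simp))
      intro m hm
      rw [norm_mul, norm_mul, norm_mul, norm_div, norm_div, norm_neg, norm_one,
        Complex.norm_natCast]
      have := jacobi_norm_le (k - m) p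
      have := (hB' _ (hx m hm t ht).1).trans hBM
      gcongr
  · intro t ht
    simp only [tildeHp, Hp]
    rw [← hI, ← Finset.sum_sub_distrib]
    refine Finset.sum_congr rfl fun m hm => ?_
    obtain ⟨h1, h2⟩ := hx m hm t ht
    obtain ⟨h3, h4⟩ := hval _ h1 (div_ne_zero h2 hp0)
    rw [h4]
    have h5 : (m : ℂ) - (t : ℂ) ≠ 0 := by exact_mod_cast h2
    push_cast
    field_simp
  · intro t ht
    unfold tildeHp
    refine HasDerivAt.fun_sum fun m hm => HasDerivAt.const_mul _ ?_
    have h5 : (m : ℂ) - (t : ℂ) ≠ 0 := by exact_mod_cast (hx m hm t ht).2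
    have := (hlin m t).fun_inv h5
    simpa using this
  · intro t ht
    refine HasDerivAt.fun_sum fun m hm => HasDerivAt.const_mul _ ?_
    have h5 : (m : ℂ) - (t : ℂ) ≠ 0 := by exact_mod_cast (hx m hm t ht).2
    have := ((hlin m t).fun_pow 2).fun_inv (pow_ne_zero 2 h5)
    simp only [one_div]
    convert this using 1
    field_simp
    norm_num
  · intro t ht
    exact HasDerivAt.fun_sum fun m hm => (hchain Φ hΦ m hm t ht).const_mul _
  · intro t ht
    exact HasDerivAt.fun_sum fun m hm =>
      ((hchain (deriv Φ) hΦ1 m hm t ht).mul_const _).const_mul _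

end
end

section
/- There exist absolute constants C > 0 and \varepsilon_0 > 0 such that for every odd prime p, every integer 0 \le k \le p-1, and every 0 < \varepsilon \le \varepsilon_0, one has |\int_0^1 \log|\widetilde{H}_p(k,t)| \mathbb{1}_{|\widetilde{H}_p(k,t)| \le \varepsilon} dt| \le C \varepsilon^{6/25}. -/
open MeasureTheory Filter

noncomputable section

/-- `H̃_p(k,t) = ∑_{|m| ≤ (p-1)/2} ((k-m)/p) · 1/(m-t)` as a real-valued function. -/
def tildeHpR (p k : ℕ) (t : ℝ) : ℝ :=
  ∑ m ∈ Finset.Icc (-(((p : ℤ) - 1) / 2)) (((p : ℤ) - 1) / 2),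
    (jacobiSym ((k : ℤ) - m) p : ℝ) / ((m : ℝ) - t)

section aux

open MeasureTheory Set

lemma aux_up (a : ℤ) (t : ℝ) (h : t < a - 1/2) (n : ℕ) :
    ∑ m ∈ Finset.Ico a (a + n), 1 / ((m : ℝ) - t) ^ 2 ≤ 1 / (a - 1/2 - t) - 1 / (a + n - 1/2 - t) := by
  induction n with
  | zero => simp
  | succ n ih =>
    have e : Finset.Ico a (a + ((n + 1 : ℕ) : ℤ)) = insert (a + (n : ℤ)) (Finset.Ico a (a + n)) := by
      ext x; simp only [Finset.mem_Ico, Finset.mem_insert]; push_cast; omega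
    rw [e, Finset.sum_insert (by simp)]
    have hn : (0:ℝ) ≤ n := Nat.cast_nonneg n
    push_cast
    set x : ℝ := a + n - t with hx
    have hx0 : 1/2 < x := by rw [hx]; linarith
    have e1 : (a:ℝ) + n - 1/2 - t = x - 1/2 := by rw [hx]; ring
    have e2 : (a:ℝ) + (n + 1) - 1/2 - t = x + 1/2 := by rw [hx]; ring
    rw [e1] at ih
    rw [e2]
    have key : 1 / x^2 ≤ 1 / (x - 1/2) - 1 / (x + 1/2) := by
      have h1 : 0 < x - 1/2 := by linarith
      have h2 : 0 < x + 1/2 := by linarith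
      have : 1 / (x - 1/2) - 1 / (x + 1/2) = 1 / ((x-1/2)*(x+1/2)) := by
        rw [div_sub_div _ _ h1.ne' h2.ne']; congr 1; ring
      rw [this]
      apply one_div_le_one_div_of_le (by positivity)
      nlinarith
    linarith

lemma aux_up' (a : ℤ) (t : ℝ) (h : t < a - 1/2) (S : Finset ℤ) (hS : ∀ m ∈ S, a ≤ m) :
    ∑ m ∈ S, 1 / ((m : ℝ) - t) ^ 2 ≤ 1 / (a - 1/2 - t) := by
  obtain ⟨B, hB⟩ := S.bddAbove
  have hsub : S ⊆ Finset.Ico a (a + ((B + 1 - a).toNat : ℤ)) := by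
    intro m hm
    have := hS m hm
    have h2 : m ≤ B := hB hm
    simp only [Finset.mem_Ico]; omega
  refine (Finset.sum_le_sum_of_subset_of_nonneg hsub (fun _ _ _ => by positivity)).trans ?_
  refine (aux_up a t h _).trans ?_
  have hn : (0:ℝ) ≤ ((B + 1 - a).toNat : ℝ) := Nat.cast_nonneg _
  have : 0 < (a:ℝ) + ((B + 1 - a).toNat : ℝ) - 1/2 - t := by linarith
  have : 0 < 1 / ((a:ℝ) + ((B + 1 - a).toNat : ℝ) - 1/2 - t) := by positivity
  linarith

lemma aux_down (a : ℤ) (t : ℝ) (h : a + 1/2 < t) (S : Finset ℤ) (hS : ∀ m ∈ S, m ≤ a) :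
    ∑ m ∈ S, 1 / ((m : ℝ) - t) ^ 2 ≤ 1 / (t - a - 1/2) := by
  have := aux_up' (-a) (-t) (by push_cast; linarith) (S.image (fun m => -m)) (by
    intro m hm
    simp only [Finset.mem_image] at hm
    obtain ⟨x, hx, rfl⟩ := hm
    have := hS x hx
    omega)
  rw [Finset.sum_image (by intro x _ y _ hxy; simpa using hxy)] at this
  have e : ∀ m : ℤ, 1 / (((-m : ℤ) : ℝ) - -t) ^ 2 = 1 / ((m : ℝ) - t) ^ 2 := by
    intro m; push_cast; congr 1; ring
  simp only [e] at this
  refine this.trans (le_of_eq ?_)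
  push_cast; congr 1; ring

lemma aux_sum (S : Finset ℤ) (u v : ℤ) (t : ℝ) (huv : u < v) (hu : u ∈ S) (hv : v ∈ S)
    (hut : (u:ℝ) < t) (htv : t < v) (b : ℤ → ℝ) (h0 : ∀ m ∈ S, u < m → m < v → b m = 0)
    (h1 : ∀ m ∈ S, (v + 1 ≤ m ∨ m ≤ u - 1) → |b m| ≤ 1 / ((m : ℝ) - t) ^ 2) :
    b u + b v - 1 / ((t - u) + 1/2) - 1 / ((v - t) + 1/2) ≤ ∑ m ∈ S, b m := by
  rw [← Finset.add_sum_erase S b hu, ← Finset.add_sum_erase (S.erase u) b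
    (Finset.mem_erase.2 ⟨huv.ne', hv⟩)]
  set T := (S.erase u).erase v
  have hpt : ∀ m ∈ T, -((if v + 1 ≤ m then 1 / ((m : ℝ) - t) ^ 2 else 0) +
      (if m ≤ u - 1 then 1 / ((m : ℝ) - t) ^ 2 else 0)) ≤ b m := by
    intro m hm
    have hmv : m ≠ v := (Finset.mem_erase.1 hm).1
    have hm' := Finset.mem_erase.1 (Finset.mem_erase.1 hm).2
    have hmu : m ≠ u := hm'.1
    have hmS := hm'.2
    by_cases c1 : v + 1 ≤ m
    · have c2 : ¬ m ≤ u - 1 := by omega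
      rw [if_pos c1, if_neg c2, add_zero]
      exact (abs_le.1 (h1 m hmS (Or.inl c1))).1
    · by_cases c2 : m ≤ u - 1
      · rw [if_neg c1, if_pos c2, zero_add]
        exact (abs_le.1 (h1 m hmS (Or.inr c2))).1
      · rw [if_neg c1, if_neg c2, h0 m hmS (by omega) (by omega)]; simp
  have := Finset.sum_le_sum hpt
  rw [Finset.sum_neg_distrib, Finset.sum_add_distrib, ← Finset.sum_filter, ← Finset.sum_filter] at this
  have A := aux_up' (v+1) t (by push_cast; linarith) (T.filter (fun m => v + 1 ≤ m)) (by simp)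
  have B := aux_down (u-1) t (by push_cast; linarith) (T.filter (fun m => m ≤ u - 1)) (by simp)
  have e1 : ((v + 1 : ℤ) : ℝ) - 1/2 - t = (v - t) + 1/2 := by push_cast; ring
  have e2 : t - ((u - 1 : ℤ) : ℝ) - 1/2 = (t - u) + 1/2 := by push_cast; ring
  rw [e1] at A
  rw [e2] at B
  linarith

lemma aux_n2 (X : ℝ) (hX : 0 < X) (hX2 : X ≤ 2) :
    1/3 - 14/9 * (X - 1) ≤ 1 / X^2 - 1 / (X + 1/2) := by
  have key : 0 ≤ 1 / X^2 - 1 / (X + 1/2) - (1/3 - 14/9 * (X - 1)) := by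
    have : 1 / X^2 - 1 / (X + 1/2) - (1/3 - 14/9 * (X - 1)) =
      ((X + 1/2) - X^2 - (1/3 - 14/9 * (X - 1)) * (X^2 * (X + 1/2))) / (X^2 * (X + 1/2)) := by
      field_simp
    rw [this]
    apply div_nonneg _ (by positivity)
    have : (X + 1/2) - X^2 - (1/3 - 14/9 * (X - 1)) * (X^2 * (X + 1/2)) =
      (X - 1)^2 * (14/9 * X^2 + 2 * X + 1/2) := by ring
    rw [this]; positivity
  linarith

lemma aux_n3 (X : ℝ) (hX : 0 < X) (hX2 : X ≤ 2) :
    1/3 - 23/9 * (X - 1) ≤ 1 / X^3 - 1 / (X + 1/2) := by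
  have key : 0 ≤ 1 / X^3 - 1 / (X + 1/2) - (1/3 - 23/9 * (X - 1)) := by
    have : 1 / X^3 - 1 / (X + 1/2) - (1/3 - 23/9 * (X - 1)) =
      ((X + 1/2) - X^3 - (1/3 - 23/9 * (X - 1)) * (X^3 * (X + 1/2))) / (X^3 * (X + 1/2)) := by
      field_simp
    rw [this]
    apply div_nonneg _ (by positivity)
    have : (X + 1/2) - X^3 - (1/3 - 23/9 * (X - 1)) * (X^3 * (X + 1/2)) =
      (X - 1)^2 * (23/9 * X^3 + 7/2 * X^2 + 2 * X + 1/2) := by ring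
    rw [this]; positivity
  linarith

lemma vol_of_pairs (E : Set ℝ) (d : ℝ) (hd : 0 ≤ d) (h : ∀ x ∈ E, ∀ y ∈ E, x < y → y - x ≤ d) :
    volume E ≤ ENNReal.ofReal d := by
  refine (Real.volume_le_diam E).trans ?_
  apply Metric.ediam_le
  intro x hx y hy
  rw [edist_dist, Real.dist_eq]
  apply ENNReal.ofReal_le_ofReal
  rcases lt_trichotomy x y with h1 | h1 | h1
  · rw [abs_sub_comm, abs_of_pos (by linarith)]; exact h x hx y hy h1
  · simp [h1, hd]
  · rw [abs_of_pos (by linarith)]; exact h y hy x hx h1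

lemma slope_bound (f f' : ℝ → ℝ) (x y c : ℝ) (hx : 0 < x) (hxy : x < y) (hy : y < 1)
    (hf : ∀ t ∈ Ioo (0:ℝ) 1, HasDerivAt f (f' t) t) (hc : ∀ t ∈ Ioo x y, c ≤ f' t) :
    c * (y - x) ≤ f y - f x := by
  obtain ⟨z, hz, he⟩ := exists_hasDerivAt_eq_slope f f' hxy
    (fun t ht => (hf t ⟨by linarith [ht.1], by linarith [ht.2]⟩).continuousAt.continuousWithinAt)
    (fun t ht => hf t ⟨by linarith [ht.1], by linarith [ht.2]⟩)
  have h1 := hc z hz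
  rw [he, le_div_iff₀ (by linarith)] at h1
  exact h1

lemma sub1 (f f' : ℝ → ℝ) (c δ : ℝ) (hc : 0 < c) (hδ : 0 < δ)
    (hf : ∀ t ∈ Ioo (0:ℝ) 1, HasDerivAt f (f' t) t) (hf' : ∀ t ∈ Ioo (0:ℝ) 1, c ≤ f' t) :
    volume {t | t ∈ Ioo (0:ℝ) 1 ∧ |f t| ≤ δ} ≤ ENNReal.ofReal (2 * δ / c) := by
  apply vol_of_pairs _ _ (by positivity)
  rintro x ⟨hx, hxf⟩ y ⟨hy, hyf⟩ hxy
  have := slope_bound f f' x y c hx.1 hxy hy.2 hf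
    (fun t ht => hf' t ⟨by linarith [ht.1, hx.1], by linarith [ht.2, hy.2]⟩)
  rw [abs_le] at hxf hyf
  rw [le_div_iff₀ hc]
  linarith [hxf.1, hyf.2]

lemma sub2 (f f' f'' : ℝ → ℝ) (c δ : ℝ) (hc : 0 < c) (hδ : 0 < δ)
    (hf : ∀ t ∈ Ioo (0:ℝ) 1, HasDerivAt f (f' t) t)
    (hf1 : ∀ t ∈ Ioo (0:ℝ) 1, HasDerivAt f' (f'' t) t) (hf2 : ∀ t ∈ Ioo (0:ℝ) 1, c ≤ f'' t) :
    volume {t | t ∈ Ioo (0:ℝ) 1 ∧ |f t| ≤ δ} ≤ ENNReal.ofReal ((2 / c + 4) * √δ) := by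
  have hη : 0 < √δ := Real.sqrt_pos.2 hδ
  have hs : √δ * √δ = δ := Real.mul_self_sqrt hδ.le
  have hmono : ∀ x ∈ Ioo (0:ℝ) 1, ∀ y ∈ Ioo (0:ℝ) 1, x < y → f' x ≤ f' y := by
    intro x hx y hy hxy
    have := slope_bound f' f'' x y c hx.1 hxy hy.2 hf1
      (fun t ht => hf2 t ⟨by linarith [ht.1, hx.1], by linarith [ht.2, hy.2]⟩)
    nlinarith
  have A := sub1 f' f'' c (√δ) hc hη hf1 hf2
  have B : volume {t | t ∈ Ioo (0:ℝ) 1 ∧ |f t| ≤ δ ∧ √δ < f' t} ≤ ENNReal.ofReal (2 * √δ) := by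
    apply vol_of_pairs _ _ (by positivity)
    rintro x ⟨hx, hxf, hx'⟩ y ⟨hy, hyf, hy'⟩ hxy
    have := slope_bound f f' x y (√δ) hx.1 hxy hy.2 hf
      (fun t ht => hx'.le.trans
        (hmono x hx t ⟨by linarith [ht.1, hx.1], by linarith [ht.2, hy.2]⟩ ht.1))
    rw [abs_le] at hxf hyf
    have h3 : √δ * (y - x) ≤ √δ * (2 * √δ) := by nlinarith [hxf.1, hyf.2]
    exact le_of_mul_le_mul_left h3 hη
  have D : volume {t | t ∈ Ioo (0:ℝ) 1 ∧ |f t| ≤ δ ∧ f' t < -√δ} ≤ ENNReal.ofReal (2 * √δ) := by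
    apply vol_of_pairs _ _ (by positivity)
    rintro x ⟨hx, hxf, hx'⟩ y ⟨hy, hyf, hy'⟩ hxy
    have := slope_bound (fun t => - f t) (fun t => - f' t) x y (√δ) hx.1 hxy hy.2
      (fun t ht => (hf t ht).neg)
      (fun t ht => by
        have := hmono t ⟨by linarith [ht.1, hx.1], by linarith [ht.2, hy.2]⟩ y hy ht.2
        linarith)
    rw [abs_le] at hxf hyf
    have h3 : √δ * (y - x) ≤ √δ * (2 * √δ) := by nlinarith [hxf.2, hyf.1]
    exact le_of_mul_le_mul_left h3 hη
  have hsub : {t | t ∈ Ioo (0:ℝ) 1 ∧ |f t| ≤ δ} ⊆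
      ({t | t ∈ Ioo (0:ℝ) 1 ∧ |f' t| ≤ √δ} ∪ {t | t ∈ Ioo (0:ℝ) 1 ∧ |f t| ≤ δ ∧ √δ < f' t}) ∪
      {t | t ∈ Ioo (0:ℝ) 1 ∧ |f t| ≤ δ ∧ f' t < -√δ} := by
    rintro t ⟨ht, hft⟩
    by_cases h1 : √δ < f' t
    · exact Or.inl (Or.inr ⟨ht, hft, h1⟩)
    · by_cases h2 : f' t < -√δ
      · exact Or.inr ⟨ht, hft, h2⟩
      · exact Or.inl (Or.inl ⟨ht, abs_le.2 ⟨by linarith, by linarith⟩⟩)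
  refine (measure_mono hsub).trans ((measure_union_le _ _).trans
    ((add_le_add ((measure_union_le _ _).trans (add_le_add A B)) D).trans ?_))
  rw [← ENNReal.ofReal_add (by positivity) (by positivity),
    ← ENNReal.ofReal_add (by positivity) (by positivity)]
  apply ENNReal.ofReal_le_ofReal
  apply le_of_eq; ring

lemma log_int (f : ℝ → ℝ) (hfm : Measurable f) (K ε₀ : ℝ) (hK : 0 ≤ K) (hε₀ : ε₀ ≤ 1)
    (hv : ∀ δ, 0 < δ → δ ≤ ε₀ →
      volume {t | t ∈ Ioo (0:ℝ) 1 ∧ |f t| ≤ δ} ≤ ENNReal.ofReal (K * √δ))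
    (ε : ℝ) (hε : 0 < ε) (hε1 : ε ≤ ε₀) :
    |∫ t in (0 : ℝ)..1, (if |f t| ≤ ε then Real.log |f t| else 0)| ≤
      (K * (50/13) * (1/2 : ℝ) ^ (-(13/50) : ℝ) * (1 - (1/2 : ℝ) ^ ((6:ℝ)/25))⁻¹) *
        ε ^ ((6:ℝ)/25) := by
  set r : ℝ := (1/2 : ℝ) ^ ((6:ℝ)/25) with hr
  have hr0 : 0 ≤ r := by positivity
  have hr1 : r < 1 := Real.rpow_lt_one (by norm_num) (by norm_num) (by norm_num)
  set q : ℝ := (1/2 : ℝ) ^ (-(13/50) : ℝ) with hq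
  have hq0 : 0 ≤ q := by positivity
  have hCnn : 0 ≤ (K * (50/13) * q * (1 - r)⁻¹) * ε ^ ((6:ℝ)/25) := by
    have : 0 ≤ (1 - r)⁻¹ := inv_nonneg.2 (by linarith)
    positivity
  rw [intervalIntegral.integral_of_le zero_le_one, integral_Ioc_eq_integral_Ioo]
  rw [← Real.norm_eq_abs]
  rw [← ENNReal.ofReal_le_ofReal_iff hCnn, ofReal_norm]
  refine (enorm_integral_le_lintegral_enorm _).trans ?_
  let w : ℕ → ℝ := fun n => (50/13) * (ε * (1/2)^(n+1)) ^ (-(13/50) : ℝ)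
  let E : ℕ → Set ℝ := fun n => {t | |f t| ≤ ε * (1/2)^n}
  have hE : ∀ n, MeasurableSet (E n) := fun n =>
    measurableSet_le (by fun_prop) measurable_const
  have hpt : ∀ t, ‖(if |f t| ≤ ε then Real.log |f t| else 0)‖ₑ ≤
      ∑' n, (E n).indicator (fun _ => ENNReal.ofReal (w n)) t := by
    intro t
    by_cases h : |f t| ≤ ε
    · rw [if_pos h]
      by_cases h0 : f t = 0
      · simp [h0]
      have hpos : 0 < |f t| := abs_pos.2 h0
      obtain ⟨n, hn1, hn2⟩ := exists_nat_pow_near_of_lt_one (x := |f t| / ε) (y := (1/2:ℝ))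
        (by positivity) ((div_le_one hε).2 h) (by norm_num) (by norm_num)
      rw [lt_div_iff₀ hε, mul_comm] at hn1
      rw [div_le_iff₀ hε, mul_comm] at hn2
      refine le_trans ?_ (ENNReal.le_tsum n)
      rw [Set.indicator_of_mem (by exact hn2), ← ofReal_norm]
      apply ENNReal.ofReal_le_ofReal
      rw [Real.norm_eq_abs, abs_of_nonpos (Real.log_nonpos hpos.le (by linarith)), ← Real.log_inv]
      refine (Real.log_le_rpow_div (inv_nonneg.2 hpos.le) (show (0:ℝ) < 13/50 by norm_num)).trans ?_
      rw [Real.inv_rpow hpos.le, ← Real.rpow_neg hpos.le]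
      have := Real.rpow_le_rpow_of_nonpos (z := -(13/50)) (by positivity) hn1.le (by norm_num)
      simp only [w]
      linarith
    · simp [h]
  refine (lintegral_mono hpt).trans ?_
  rw [lintegral_tsum (fun n => (measurable_const.indicator (hE n)).aemeasurable)]
  have hterm : ∀ n, ∫⁻ t in Ioo (0:ℝ) 1, (E n).indicator (fun _ => ENNReal.ofReal (w n)) t ≤
      ENNReal.ofReal ((K * (50/13) * q) * ε ^ ((6:ℝ)/25) * r ^ n) := by
    intro n
    rw [lintegral_indicator_const (hE n), Measure.restrict_apply (hE n)]
    have hle : (1/2:ℝ)^n ≤ 1 := pow_le_one₀ (by norm_num) (by norm_num)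
    have hp : 0 < (1/2:ℝ)^n := by positivity
    have := hv (ε * (1/2)^n) (by positivity) (by nlinarith)
    have he : E n ∩ Ioo 0 1 = {t | t ∈ Ioo (0:ℝ) 1 ∧ |f t| ≤ ε * (1/2)^n} := by
      ext t; simp [E, and_comm]
    rw [he]
    refine (mul_le_mul_right this _).trans ?_
    have hw : 0 ≤ w n := by positivity
    rw [← ENNReal.ofReal_mul hw]
    apply ENNReal.ofReal_le_ofReal
    apply le_of_eq
    have e1 : (ε * (1/2:ℝ)^(n+1)) ^ (-(13/50) : ℝ) = (ε * (1/2)^n) ^ (-(13/50) : ℝ) * q := by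
      rw [pow_succ, ← mul_assoc, Real.mul_rpow (by positivity) (by positivity)]
    have e2 : (ε * (1/2:ℝ)^n) ^ (-(13/50) : ℝ) * √(ε * (1/2)^n) = ε ^ ((6:ℝ)/25) * r ^ n := by
      rw [Real.sqrt_eq_rpow, ← Real.rpow_add (by positivity), Real.mul_rpow hε.le hp.le, hr,
        ← Real.rpow_natCast, ← Real.rpow_natCast, ← Real.rpow_mul (by norm_num), ← Real.rpow_mul (by norm_num)]
      norm_num [mul_comm]
    simp only [w]
    rw [e1]
    linear_combination (K * (50/13) * q) * e2
  refine (ENNReal.tsum_le_tsum hterm).trans ?_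
  have hs : Summable (fun n : ℕ => (K * (50/13) * q) * ε ^ ((6:ℝ)/25) * r ^ n) :=
    (summable_geometric_of_lt_one hr0 hr1).mul_left _
  rw [← ENNReal.ofReal_tsum_of_nonneg (fun n => by positivity) hs, tsum_mul_left,
    tsum_geometric_of_lt_one hr0 hr1]
  apply ENNReal.ofReal_le_ofReal
  apply le_of_eq; ring

lemma ne_of_Ioo (m : ℤ) (t : ℝ) (ht : t ∈ Ioo (0:ℝ) 1) : (m : ℝ) - t ≠ 0 := by
  intro h
  have h1 : (m:ℝ) = t := by linarith
  have h2 : (0:ℝ) < m := h1 ▸ ht.1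
  have h3 : (m:ℝ) < 1 := h1 ▸ ht.2
  have h2' : 0 < m := by exact_mod_cast h2
  have h3' : m < 1 := by exact_mod_cast h3
  omega

lemma deriv1 (S : Finset ℤ) (a : ℤ → ℝ) (t : ℝ) (ht : t ∈ Ioo (0:ℝ) 1) :
    HasDerivAt (fun t : ℝ => ∑ m ∈ S, a m / ((m:ℝ) - t)) (∑ m ∈ S, a m / ((m:ℝ) - t)^2) t := by
  apply HasDerivAt.fun_sum
  intro m _
  have h := ne_of_Ioo m t ht
  have := (((hasDerivAt_id t).const_sub (m:ℝ)).fun_inv h).const_mul (a m)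
  simp only [id, ← div_eq_mul_inv] at this
  refine this.congr_deriv ?_
  ring

lemma deriv2 (S : Finset ℤ) (a : ℤ → ℝ) (t : ℝ) (ht : t ∈ Ioo (0:ℝ) 1) :
    HasDerivAt (fun t : ℝ => ∑ m ∈ S, a m / ((m:ℝ) - t)^2) (2 * ∑ m ∈ S, a m / ((m:ℝ) - t)^3) t := by
  rw [Finset.mul_sum]
  apply HasDerivAt.fun_sum
  intro m _
  have h := ne_of_Ioo m t ht
  have := ((((hasDerivAt_id t).const_sub (m:ℝ)).fun_pow 2).fun_inv (pow_ne_zero 2 h)).const_mul (a m)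
  simp only [id, ← div_eq_mul_inv] at this
  refine this.congr_deriv ?_
  field_simp
  simp
  ring

lemma sublevel (S : Finset ℤ) (a : ℤ → ℝ) (u v : ℤ) (hu0 : u ≤ 0) (hv1 : 1 ≤ v)
    (huv2 : v - u ≤ 2) (hu : u ∈ S) (hv : v ∈ S) (ha : ∀ m, |a m| ≤ 1)
    (hau : a u = 1 ∨ a u = -1) (hav : a v = 1 ∨ a v = -1)
    (h0 : ∀ m, u < m → m < v → a m = 0) (δ : ℝ) (hδ : 0 < δ) (hδ1 : δ ≤ 1) :
    volume {t | t ∈ Ioo (0:ℝ) 1 ∧ |∑ m ∈ S, a m / ((m:ℝ) - t)| ≤ δ} ≤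
      ENNReal.ofReal (7 * √δ) := by
  wlog hv' : a v = 1 generalizing a
  · have hv'' : a v = -1 := by tauto
    have := this (fun m => - a m) (by simpa using ha)
      (by rcases hau with h | h <;> simp [h]) (by simp [hv'']) (by simpa using h0) (by simp [hv''])
    simpa [neg_div] using this
  have hu0R : (u:ℝ) ≤ 0 := by exact_mod_cast hu0
  have hv1R : (1:ℝ) ≤ v := by exact_mod_cast hv1
  have huvR : (v:ℝ) - u ≤ 2 := by exact_mod_cast huv2
  have hbig : ∀ t ∈ Ioo (0:ℝ) 1, ∀ m : ℤ, (v + 1 ≤ m ∨ m ≤ u - 1) → 1 ≤ |(m:ℝ) - t| := by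
    intro t ht m hm
    rw [le_abs]
    rcases hm with h | h
    · left
      have : ((v:ℝ) + 1) ≤ m := by exact_mod_cast h
      linarith [ht.2]
    · right
      have : (m:ℝ) ≤ u - 1 := by exact_mod_cast h
      linarith [ht.1]
  have hsq : δ ≤ √δ := Real.le_sqrt_of_sq_le (by nlinarith)
  rcases hau with hu' | hu'
  · refine (sub1 _ _ (2/3) δ (by norm_num) hδ (fun t ht => deriv1 S a t ht) ?_).trans ?_
    · intro t ht
      have := aux_sum S u v t (by omega) hu hv (by linarith [ht.1]) (by linarith [ht.2])
        (fun m => a m / ((m:ℝ) - t)^2) (fun m _ h1 h2 => by simp [h0 m h1 h2])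
        (fun m _ hm => by
          rw [abs_div, abs_of_nonneg (sq_nonneg ((m:ℝ) - t))]
          exact div_le_div_of_nonneg_right (ha m) (sq_nonneg _))
      simp only [hu', hv'] at this
      have n1 := aux_n2 (t - u) (by linarith [ht.1]) (by linarith [ht.2])
      have n2 := aux_n2 (v - t) (by linarith [ht.2]) (by linarith [ht.1])
      have e : ((u:ℝ) - t)^2 = (t - u)^2 := by ring
      rw [e] at this
      linarith
    · apply ENNReal.ofReal_le_ofReal
      linarith
  · refine (sub2 _ _ _ (4/3) δ (by norm_num) hδ (fun t ht => deriv1 S a t ht)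
      (fun t ht => deriv2 S a t ht) ?_).trans ?_
    · intro t ht
      have := aux_sum S u v t (by omega) hu hv (by linarith [ht.1]) (by linarith [ht.2])
        (fun m => a m / ((m:ℝ) - t)^3) (fun m _ h1 h2 => by simp [h0 m h1 h2])
        (fun m _ hm => by
          have hb := hbig t ht m hm
          rw [abs_div, abs_pow, ← sq_abs ((m:ℝ) - t)]
          apply div_le_div₀ zero_le_one (ha m) (by positivity)
          exact pow_le_pow_right₀ hb (by norm_num))
      simp only [hu', hv'] at this
      have n1 := aux_n3 (t - u) (by linarith [ht.1]) (by linarith [ht.2])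
      have n2 := aux_n3 (v - t) (by linarith [ht.2]) (by linarith [ht.1])
      have e : -1 / ((u:ℝ) - t)^3 = 1 / (t - u)^3 := by
        rw [show ((u:ℝ) - t)^3 = -(t - u)^3 by ring, neg_div_neg_eq]
      rw [e] at this
      linarith
    · apply ENNReal.ofReal_le_ofReal
      have := Real.sqrt_nonneg δ
      linarith

lemma jac_pm (x : ℤ) (p : ℕ) (hp : p.Prime) (h : ¬ (p:ℤ) ∣ x) :
    (jacobiSym x p : ℝ) = 1 ∨ (jacobiSym x p : ℝ) = -1 := by
  have hg : x.gcd p = 1 := by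
    rw [Int.gcd_comm]
    exact Int.isCoprime_iff_gcd_eq_one.1 (((Nat.prime_iff_prime_int.1 hp).coprime_iff_not_dvd).2 h)
  rcases jacobiSym.eq_one_or_neg_one hg with h | h
  · left; simp [h]
  · right; simp [h]

lemma jac_abs (x : ℤ) (p : ℕ) : |(jacobiSym x p : ℝ)| ≤ 1 := by
  rcases jacobiSym.trichotomy x p with h | h | h <;> simp [h]

lemma not_dvd_small (p : ℕ) (x : ℤ) (hx : x ≠ 0) (h : |x| < p) : ¬ (p:ℤ) ∣ x := by
  intro hd
  exact hx (Int.eq_zero_of_abs_lt_dvd hd h)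

lemma tilde_meas (p k : ℕ) : Measurable (tildeHpR p k) := by
  unfold tildeHpR
  apply Finset.measurable_fun_sum
  intro m _
  fun_prop

lemma tilde_sub (p : ℕ) (hp : p.Prime) (hodd : Odd p) (k : ℕ) (hk : k ≤ p - 1)
    (δ : ℝ) (hδ : 0 < δ) (hδ1 : δ ≤ 1/4) :
    volume {t | t ∈ Ioo (0:ℝ) 1 ∧ |tildeHpR p k t| ≤ δ} ≤ ENNReal.ofReal (7 * √δ) := by
  have hp2 := hp.two_le
  obtain ⟨M, rfl⟩ := hodd
  have hM : 1 ≤ M := by omega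
  have hMM : (((2 * M + 1 : ℕ) : ℤ) - 1) / 2 = M := by push_cast; omega
  have hone : ¬ (((2 * M + 1 : ℕ) : ℤ)) ∣ 1 := not_dvd_small _ _ (by norm_num) (by push_cast; simp; omega)
  have hneg : ¬ (((2 * M + 1 : ℕ) : ℤ)) ∣ -1 := not_dvd_small _ _ (by norm_num) (by push_cast; simp; omega)
  unfold tildeHpR
  rw [hMM]
  have hz : (jacobiSym 0 (2 * M + 1) : ℝ) = 0 := by
    rw [jacobiSym.zero_left (by omega)]; simp
  rcases (show k = 0 ∨ k = 1 ∨ 2 ≤ k by omega) with rfl | rfl | h2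
  · refine sublevel _ (fun m => (jacobiSym (((0:ℕ):ℤ) - m) (2 * M + 1) : ℝ)) (-1) 1 (by norm_num) (by norm_num)
      (by norm_num) (by simp; omega) (by simp; omega) (fun m => jac_abs _ _) ?_ ?_ ?_ δ hδ (by linarith)
    · exact jac_pm _ _ hp (by simpa using hone)
    · exact jac_pm _ _ hp (by simpa using hneg)
    · intro m h1 h3
      have : m = 0 := by omega
      subst this
      simpa using hz
  · by_cases hM2 : 2 ≤ M
    · refine sublevel _ (fun m => (jacobiSym (((1:ℕ):ℤ) - m) (2 * M + 1) : ℝ)) 0 2 (by norm_num) (by norm_num)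
        (by norm_num) (by simp) (by simp; omega) (fun m => jac_abs _ _) ?_ ?_ ?_ δ hδ (by linarith)
      · exact jac_pm _ _ hp (by simpa using hone)
      · exact jac_pm _ _ hp (by simpa using hneg)
      · intro m h1 h3
        have : m = 1 := by omega
        subst this
        simpa using hz
    · have : M = 1 := by omega
      subst this
      have : {t : ℝ | t ∈ Ioo (0:ℝ) 1 ∧ |∑ m ∈ Finset.Icc (-((1:ℕ):ℤ)) ((1:ℕ):ℤ),
          (jacobiSym (((1:ℕ):ℤ) - m) (2 * 1 + 1) : ℝ) / ((m : ℝ) - t)| ≤ δ} = ∅ := by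
        rw [Set.eq_empty_iff_forall_notMem]
        rintro t ⟨ht, hle⟩
        have eS : Finset.Icc (-((1:ℕ):ℤ)) ((1:ℕ):ℤ) = {-1, 0, 1} := by decide
        have j2 : jacobiSym 2 3 = -1 := by norm_num
        rw [eS] at hle
        have h1 := ht.1
        have h2 := ht.2
        have e : ∑ m ∈ ({-1, 0, 1} : Finset ℤ),
          (jacobiSym (((1:ℕ):ℤ) - m) (2 * 1 + 1) : ℝ) / ((m : ℝ) - t) = -(1 / (t * (1 + t))) := by
          rw [Finset.sum_insert (by decide), Finset.sum_insert (by decide), Finset.sum_singleton]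
          norm_num [j2]
          have : -1 - t ≠ 0 := by linarith
          field_simp
          ring
        rw [e, abs_neg, abs_of_pos (by positivity), div_le_iff₀ (by positivity)] at hle
        nlinarith [mul_pos h1 h1]
      rw [this]; simp
  · have hkk : (k:ℤ) ≤ 2 * M := by omega
    refine sublevel _ (fun m => (jacobiSym ((k:ℤ) - m) (2 * M + 1) : ℝ)) 0 1 (by norm_num) (by norm_num)
      (by norm_num) (by simp) (by simp; omega) (fun m => jac_abs _ _) ?_ ?_ ?_ δ hδ (by linarith)
    · exact jac_pm _ _ hp (not_dvd_small _ _ (by omega) (by rw [abs_lt]; push_cast; omega))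
    · exact jac_pm _ _ hp (not_dvd_small _ _ (by omega) (by rw [abs_lt]; push_cast; omega))
    · intro m h1 h3
      omega

end aux

/-- The truncated logarithmic integral of `H̃_p(k,·)` is small:
`|∫_0^1 log|H̃_p(k,t)| 1_{|H̃_p(k,t)| ≤ ε} dt| ≤ C ε^{6/25}`. -/
theorem log_truncation_tildeHp :
    ∃ C : ℝ, 0 < C ∧ ∃ ε₀ : ℝ, 0 < ε₀ ∧
      ∀ p : ℕ, p.Prime → Odd p → ∀ k : ℕ, k ≤ p - 1 →
      ∀ ε : ℝ, 0 < ε → ε ≤ ε₀ →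
        |∫ t in (0 : ℝ)..1,
            (if |tildeHpR p k t| ≤ ε then Real.log |tildeHpR p k t| else 0)|
          ≤ C * ε ^ ((6 : ℝ) / 25) := by
  have hr1 : (1/2 : ℝ) ^ ((6:ℝ)/25) < 1 :=
    Real.rpow_lt_one (by norm_num) (by norm_num) (by norm_num)
  refine ⟨7 * (50/13) * (1/2 : ℝ) ^ (-(13/50) : ℝ) * (1 - (1/2 : ℝ) ^ ((6:ℝ)/25))⁻¹, ?_,
    1/4, by norm_num, ?_⟩
  · have : 0 < (1 - (1/2 : ℝ) ^ ((6:ℝ)/25))⁻¹ := inv_pos.2 (by linarith)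
    positivity
  · intro p hp hodd k hk ε hε hε1
    have := log_int (tildeHpR p k) (tilde_meas p k) 7 (1/4) (by norm_num) (by norm_num)
      (fun δ h1 h2 => tilde_sub p hp hodd k hk δ h1 h2) ε hε hε1
    convert this

end
end

section
/- There is an absolute constant C > 0 such that for every odd prime p, (1/p) \sum_{k=0}^{p-1} \big( \sum_{1 \le |m| \le (p-1)/2} ((k-m)/p) \cdot 1/m \big)^2 \le C. -/
open scoped Classical

noncomputable section

lemma aux_corr (p : ℕ) [Fact p.Prime] (hp : p ≠ 2) (a b : ZMod p) (hab : a ≠ b) :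
    ∑ x : ZMod p, quadraticChar (ZMod p) (x - a) * quadraticChar (ZMod p) (x - b) = -1 := by
  set χ := quadraticChar (ZMod p) with hχ
  have hc : ringChar (ZMod p) ≠ 2 := by rwa [ZMod.ringChar_zmod_n]
  have h1 : χ ≠ 1 := quadraticChar_ne_one hc
  have hq : χ⁻¹ = χ := (quadraticChar_isQuadratic (ZMod p)).inv
  have hJ := jacobiSum_nontrivial_inv h1
  rw [hq, jacobiSum] at hJ
  have hd : b - a ≠ 0 := sub_ne_zero.mpr hab.symm
  have hs := quadraticChar_sq_one hd
  have hm : χ (-1) ^ 2 = 1 := quadraticChar_sq_one (neg_ne_zero.mpr one_ne_zero)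
  have e : ∑ x : ZMod p, χ (x - a) * χ (x - b)
      = ∑ x : ZMod p, χ (-1) * (χ x * χ (1 - x)) := by
    symm
    refine Fintype.sum_equiv ((Equiv.mulLeft₀ (b - a) hd).trans (Equiv.addRight a)) _ _ ?_
    intro x
    have e1 : ((Equiv.mulLeft₀ (b - a) hd).trans (Equiv.addRight a)) x - a = (b - a) * x := by
      simp
    have e2 : ((Equiv.mulLeft₀ (b - a) hd).trans (Equiv.addRight a)) x - b
        = (b - a) * ((-1) * (1 - x)) := by
      simp; ring
    rw [e1, e2, map_mul, map_mul, map_mul]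
    linear_combination (-(χ (-1) * (χ x * χ (1 - x)))) * hs
  rw [e, ← Finset.mul_sum, hJ]
  linear_combination -hm

lemma aux_diag (p : ℕ) [Fact p.Prime] (a : ZMod p) :
    ∑ x : ZMod p, quadraticChar (ZMod p) (x - a) * quadraticChar (ZMod p) (x - a)
      = (p : ℤ) - 1 := by
  have : ∀ x : ZMod p, quadraticChar (ZMod p) (x - a) * quadraticChar (ZMod p) (x - a)
      = 1 - if x = a then 1 else 0 := by
    intro x
    split_ifs with h
    · simp [h]
    · rw [← sq, quadraticChar_sq_one (sub_ne_zero.mpr h)]; simp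
  rw [Finset.sum_congr rfl fun x _ => this x]
  simp [Finset.sum_sub_distrib, ZMod.card]

lemma aux_range (p : ℕ) [Fact p.Prime] (f : ZMod p → ℤ) :
    ∑ k ∈ Finset.range p, f ((k : ℕ) : ZMod p) = ∑ x : ZMod p, f x := by
  refine Finset.sum_bij' (fun k _ => (k : ZMod p)) (fun x _ => x.val) ?_ ?_ ?_ ?_ ?_
  · simp
  · intro x _; simpa using ZMod.val_lt x
  · intro k hk; exact ZMod.val_cast_of_lt (by simpa using hk)
  · intro x _; simp
  · simp

lemma aux_jac (p : ℕ) [Fact p.Prime] (hp : p ≠ 2) (m n : ℤ) :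
    ∑ k ∈ Finset.range p, jacobiSym ((k : ℤ) - m) p * jacobiSym ((k : ℤ) - n) p
      = (if (m : ZMod p) = n then (p : ℤ) else 0) - 1 := by
  have h : ∀ (k : ℕ) (m : ℤ), jacobiSym ((k : ℤ) - m) p
      = quadraticChar (ZMod p) ((k : ZMod p) - (m : ZMod p)) := by
    intro k m
    rw [← jacobiSym.legendreSym.to_jacobiSym, legendreSym]
    simp
  simp only [h]
  rw [aux_range p (fun x => quadraticChar (ZMod p) (x - m) * quadraticChar (ZMod p) (x - n))]
  split_ifs with hmn
  · rw [hmn]; exact aux_diag p _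
  · rw [aux_corr p hp _ _ hmn]; simp

/-- There is an absolute constant `C > 0` such that for every odd prime
`p`, `(1/p) ∑_{k<p} (∑_{1 ≤ |m| ≤ (p-1)/2} ((k-m)/p)/m)² ≤ C`, where `(·/p)` is the
Legendre symbol. -/
theorem second_moment_legendre_harmonic :
    ∃ C : ℝ, 0 < C ∧ ∀ p : ℕ, p.Prime → Odd p →
      (∑ k ∈ Finset.range p,
          (∑ m ∈ Finset.Icc (-(((p : ℤ) - 1) / 2)) (((p : ℤ) - 1) / 2) \ {0},
              (jacobiSym ((k : ℤ) - m) p : ℝ) / (m : ℝ)) ^ 2) / (p : ℝ)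
        ≤ C := by
  have hsum : Summable (fun m : ℤ => 1 / (m : ℝ) ^ 2) :=
    Real.summable_one_div_int_pow.mpr (by norm_num)
  have hnn : ∀ m : ℤ, 0 ≤ 1 / (m : ℝ) ^ 2 := fun m => by positivity
  refine ⟨∑' m : ℤ, 1 / (m : ℝ) ^ 2 + 1, ?_, ?_⟩
  · have : 0 ≤ ∑' m : ℤ, 1 / (m : ℝ) ^ 2 := tsum_nonneg hnn
    linarith
  intro p hp hodd
  haveI : Fact p.Prime := ⟨hp⟩
  have hp2 : p ≠ 2 := by rintro rfl; exact absurd hodd (by decide)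
  have hp0 : (0 : ℝ) < p := by exact_mod_cast hp.pos
  set S := Finset.Icc (-(((p : ℤ) - 1) / 2)) (((p : ℤ) - 1) / 2) \ {0} with hS
  have hinj : ∀ m ∈ S, ∀ n ∈ S, ((m : ZMod p) = n ↔ m = n) := by
    intro m hm n hn
    refine ⟨fun h => ?_, fun h => by rw [h]⟩
    simp only [hS, Finset.mem_sdiff, Finset.mem_Icc] at hm hn
    have hd := (ZMod.intCast_eq_intCast_iff_dvd_sub m n p).mp h
    have hz := Int.eq_zero_of_abs_lt_dvd hd (by rw [abs_lt]; have := hp.pos; omega)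
    omega
  have key : ∑ k ∈ Finset.range p, (∑ m ∈ S, (jacobiSym ((k : ℤ) - m) p : ℝ) / (m : ℝ)) ^ 2
      = p * ∑ m ∈ S, 1 / (m : ℝ) ^ 2 - (∑ m ∈ S, 1 / (m : ℝ)) ^ 2 := by
    calc _ = ∑ k ∈ Finset.range p, ∑ m ∈ S, ∑ n ∈ S,
          (1 / (m : ℝ) * (1 / (n : ℝ))) *
            ((jacobiSym ((k : ℤ) - m) p * jacobiSym ((k : ℤ) - n) p : ℤ) : ℝ) := by
          refine Finset.sum_congr rfl fun k _ => ?_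
          rw [sq, Finset.sum_mul_sum]
          refine Finset.sum_congr rfl fun m _ => Finset.sum_congr rfl fun n _ => ?_
          push_cast; ring
      _ = ∑ m ∈ S, ∑ n ∈ S, (1 / (m : ℝ) * (1 / (n : ℝ))) * ((if m = n then (p : ℝ) else 0) - 1) := by
          rw [Finset.sum_comm]
          refine Finset.sum_congr rfl fun m hm => ?_
          rw [Finset.sum_comm]
          refine Finset.sum_congr rfl fun n hn => ?_
          rw [← Finset.mul_sum, ← Int.cast_sum, aux_jac p hp2]
          simp only [hinj m hm n hn]
          push_cast; rfl
      _ = _ := by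
          rw [sq (∑ m ∈ S, 1 / (m : ℝ)), Finset.sum_mul_sum, Finset.mul_sum,
            ← Finset.sum_sub_distrib]
          refine Finset.sum_congr rfl fun m hm => ?_
          simp only [mul_sub, Finset.sum_sub_distrib, mul_ite, mul_zero, mul_one,
            Finset.sum_ite_eq, hm, if_true]
          ring
  rw [key, div_le_iff₀ hp0]
  have hle : ∑ m ∈ S, 1 / (m : ℝ) ^ 2 ≤ ∑' m : ℤ, 1 / (m : ℝ) ^ 2 :=
    hsum.sum_le_tsum S (fun m _ => hnn m)
  have := mul_le_mul_of_nonneg_left hle hp0.le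
  nlinarith [sq_nonneg (∑ m ∈ S, 1 / (m : ℝ))]

end
end

section
/- There is an absolute constant C > 0 such that for every prime p, every integer n \ge 1, and all integers m_1, \dots, m_n with |m_i| \le (p-1)/2, one has |(1/p) \sum_{k=0}^{p-1} \prod_{i=1}^n ((k-m_i)/p) - \delta| \le C n/\sqrt{p}, where \delta = 1 if every integer occurs an even number of times in the list m_1, \dots, m_n, and \delta = 0 otherwise. -/
open scoped Classical

noncomputable section

namespace Stepanov
open Polynomial

variable {p : ℕ} [Fact p.Prime]

/-- One step of the twisted derivative. -/
def stepMap (f : (ZMod p)[X]) (e : ℕ) : (ZMod p)[X] →ₗ[ZMod p] (ZMod p)[X] :=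
  LinearMap.mulLeft (ZMod p) ((e : (ZMod p)[X]) * derivative f) +
    (LinearMap.mulLeft (ZMod p) f).comp derivative

/-- Iterated twisted derivative. -/
def twist (f : (ZMod p)[X]) (N : ℕ) : ℕ → (ZMod p)[X] →ₗ[ZMod p] (ZMod p)[X]
  | 0 => LinearMap.id
  | k + 1 => (stepMap f (N - k)).comp (twist f N k)

lemma natDegree_twist (f : (ZMod p)[X]) (N k n : ℕ) (hf : f.natDegree ≤ n) (u : (ZMod p)[X]) :
    (twist f N k u).natDegree ≤ u.natDegree + k * n := by
  induction k with
  | zero => simp [twist]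
  | succ k ih =>
    simp only [twist, stepMap, LinearMap.comp_apply, LinearMap.add_apply, LinearMap.mulLeft_apply]
    have h1 : (derivative f).natDegree ≤ n := le_trans (natDegree_derivative_le f) (by omega)
    have h2 : (derivative (twist f N k u)).natDegree ≤ u.natDegree + k * n :=
      le_trans (natDegree_derivative_le _) (by omega)
    refine natDegree_add_le_of_degree_le ?_ ?_
    · refine le_trans natDegree_mul_le ?_
      have := natDegree_mul_le (p := (((N - k : ℕ)) : (ZMod p)[X])) (q := derivative f)
      rw [natDegree_natCast] at this
      rw [add_mul]; omega
    · refine le_trans natDegree_mul_le ?_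
      rw [add_mul]; omega

lemma iterate_derivative_twist (f : (ZMod p)[X]) (N k j : ℕ) (hk : k ≤ N) (u : (ZMod p)[X]) :
    derivative^[k] (f ^ N * u * X ^ (j * p)) = f ^ (N - k) * twist f N k u * X ^ (j * p) := by
  induction k with
  | zero => simp [twist]
  | succ k ih =>
    rw [Function.iterate_succ_apply', ih (by omega)]
    obtain ⟨M, rfl⟩ : ∃ M, N = M + 1 + k := ⟨N - 1 - k, by omega⟩
    have e1 : M + 1 + k - k = M + 1 := by omega
    have e2 : M + 1 + k - (k + 1) = M := by omega
    simp only [twist, stepMap, LinearMap.comp_apply, LinearMap.add_apply,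
      LinearMap.mulLeft_apply, e1, e2]
    have h0 : derivative ((X : (ZMod p)[X]) ^ (j * p)) = 0 := by
      rw [derivative_X_pow]; simp
    rw [derivative_mul, h0, derivative_mul, derivative_pow]
    simp only [Nat.add_sub_cancel, C_eq_natCast]
    ring

lemma parity {f r s : (ZMod p)[X]} {c a : ZMod p} (hc : c ≠ 0) (hf : Odd (rootMultiplicity a f))
    (h : f * r ^ 2 = C c * s ^ 2) : r = 0 ∧ s = 0 := by
  have hf0 : f ≠ 0 := by rintro rfl; simp at hf
  have hC : (C c : (ZMod p)[X]) ≠ 0 := by simpa using hc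
  by_cases hs : s = 0
  · subst hs; simpa [hf0] using h
  · by_cases hr : r = 0
    · subst hr; exact ⟨rfl, by simpa [hC, eq_comm] using h⟩
    · exfalso
      have h2 := congrArg (rootMultiplicity a) h
      rw [pow_two, pow_two, rootMultiplicity_mul (by positivity), rootMultiplicity_mul (by positivity),
        rootMultiplicity_mul (by positivity), rootMultiplicity_mul (by positivity), rootMultiplicity_C] at h2
      obtain ⟨k, hk⟩ := hf
      omega

lemma nonvanish {f : (ZMod p)[X]} {a : ZMod p} {c n D : ℕ} (hp : 2 * c + 1 = p)
    (hf : Odd (rootMultiplicity a f)) (hf0 : f.coeff 0 ≠ 0) (hn : f.natDegree ≤ n)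
    (hD : 2 * D + n < p + 2) (J : ℕ) : ∀ r s : ℕ → (ZMod p)[X],
    (∀ j < J, (r j).natDegree < D) → (∀ j < J, (s j).natDegree < D) →
    ∑ j ∈ Finset.range J, (r j + s j * f ^ c) * X ^ (j * p) = 0 →
    ∀ j < J, r j = 0 ∧ s j = 0 := by
  induction J with
  | zero => intro r s _ _ _ j hj; omega
  | succ J ih =>
    intro r s hr hs h
    rw [Finset.sum_range_succ'] at h
    have hsplit : ∑ j ∈ Finset.range J, (r (j + 1) + s (j + 1) * f ^ c) * X ^ ((j + 1) * p)
        = X ^ p * ∑ j ∈ Finset.range J, (r (j + 1) + s (j + 1) * f ^ c) * X ^ (j * p) := by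
      rw [Finset.mul_sum]
      refine Finset.sum_congr rfl fun j _ => ?_
      rw [add_mul j 1 p, one_mul, pow_add]; ring
    rw [hsplit] at h
    set Q := ∑ j ∈ Finset.range J, (r (j + 1) + s (j + 1) * f ^ c) * X ^ (j * p) with hQ
    simp only [zero_mul, pow_zero, mul_one] at h
    have hexp : (X : (ZMod p)[X]) ^ p ∣ f ^ p - C (f.coeff 0) := by
      rw [← ZMod.expand_card f]
      have h1 : (X : (ZMod p)[X]) ∣ f - C (f.coeff 0) := by
        rw [X_dvd_iff]; simp
      obtain ⟨q, hq⟩ := h1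
      refine ⟨expand (ZMod p) p q, ?_⟩
      have := congrArg (expand (ZMod p) p) hq
      rw [map_sub, map_mul, expand_C, expand_X] at this
      exact this
    have hdvd : (X : (ZMod p)[X]) ^ p ∣ f * r 0 ^ 2 - C (f.coeff 0) * s 0 ^ 2 := by
      have e : f * r 0 ^ 2 - C (f.coeff 0) * s 0 ^ 2 =
          X ^ p * (-Q * (r 0 - s 0 * f ^ c) * f) + s 0 ^ 2 * (f ^ p - C (f.coeff 0)) := by
        have e1 : X ^ p * Q = - (r 0 + s 0 * f ^ c) := eq_neg_of_add_eq_zero_left h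
        have e2 : f ^ p = f ^ c * f ^ c * f := by
          calc f ^ p = f ^ (2 * c + 1) := congrArg (fun e => f ^ e) hp.symm
            _ = f ^ c * f ^ c * f := by ring
        rw [e2]
        linear_combination ((r 0 - s 0 * f ^ c) * f) * e1
      rw [e]
      exact dvd_add (dvd_mul_right _ _) (Dvd.dvd.mul_left hexp _)
    have hz := eq_zero_of_dvd_of_natDegree_lt hdvd (by
      rw [natDegree_X_pow]
      have h1 := hr 0 (by omega)
      have h2 := hs 0 (by omega)
      refine lt_of_le_of_lt (natDegree_sub_le _ _) (max_lt ?_ ?_)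
      · refine lt_of_le_of_lt natDegree_mul_le ?_
        rw [natDegree_pow]; omega
      · refine lt_of_le_of_lt natDegree_mul_le ?_
        rw [natDegree_pow, natDegree_C]; omega)
    obtain ⟨hr0, hs0⟩ := parity hf0 hf (sub_eq_zero.mp hz)
    have hQ0 : Q = 0 := by
      rw [hr0, hs0] at h
      simpa using h
    have := ih (fun j => r (j + 1)) (fun j => s (j + 1)) (fun j hj => hr _ (by omega))
      (fun j hj => hs _ (by omega)) hQ0
    intro j hj
    cases j with
    | zero => exact ⟨hr0, hs0⟩
    | succ j => exact this j (by omega)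

lemma exists_aux (f : (ZMod p)[X]) (c n D J l : ℕ) (b : ZMod p) (hn : f.natDegree ≤ n)
    (hlt : l * (D + J + l * n) < 2 * D * J) :
    ∃ r s : ℕ → (ZMod p)[X], (∀ j, (r j).natDegree < D) ∧ (∀ j, (s j).natDegree < D) ∧
      (∃ j < J, ¬ (r j = 0 ∧ s j = 0)) ∧
      ∀ k < l, ∑ j ∈ Finset.range J,
        (twist f l k (r j) + C b * twist f (l + c) k (s j)) * X ^ j = 0 := by
  have hD0 : 0 < D := by
    rcases Nat.eq_zero_or_pos D with h | h
    · subst h; simp at hlt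
    · exact h
  let V := Fin J → (degreeLT (ZMod p) D) × (degreeLT (ZMod p) D)
  let sig : Fin l → V →ₗ[ZMod p] (ZMod p)[X] := fun k =>
    ∑ j : Fin J, (LinearMap.mulRight (ZMod p) (X ^ (j : ℕ))).comp
      (((twist f l k).comp ((degreeLT (ZMod p) D).subtype.comp (LinearMap.fst _ _ _)) +
        (LinearMap.mulLeft (ZMod p) (C b)).comp
          ((twist f (l + c) k).comp ((degreeLT (ZMod p) D).subtype.comp (LinearMap.snd _ _ _)))).comp
        (LinearMap.proj j))
  let Φ : V →ₗ[ZMod p] (Fin l → Fin (D + J + l * n) → ZMod p) :=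
    LinearMap.pi fun k => LinearMap.pi fun i => (lcoeff (ZMod p) i).comp (sig k)
  have hfin : FiniteDimensional (ZMod p) (degreeLT (ZMod p) D) :=
    LinearEquiv.finiteDimensional (degreeLTEquiv (ZMod p) D).symm
  have hrank : Module.finrank (ZMod p) (degreeLT (ZMod p) D) = D := by
    rw [LinearEquiv.finrank_eq (degreeLTEquiv (ZMod p) D)]; simp
  have hker : Φ.ker ≠ ⊥ := by
    apply LinearMap.ker_ne_bot_of_finrank_lt
    simp only [V, Module.finrank_pi_fintype, Module.finrank_prod, hrank]
    simp
    nlinarith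
  obtain ⟨v, hv, hv0⟩ := (Submodule.ne_bot_iff _).mp hker
  have deg : ∀ q : degreeLT (ZMod p) D, (q : (ZMod p)[X]).natDegree < D := by
    intro q
    have := mem_degreeLT.mp q.2
    by_cases h : (q : (ZMod p)[X]) = 0
    · rw [h]; simpa
    · exact (natDegree_lt_iff_degree_lt h).mpr this
  refine ⟨fun j => if h : j < J then (v ⟨j, h⟩).1 else 0,
    fun j => if h : j < J then (v ⟨j, h⟩).2 else 0, ?_, ?_, ?_, ?_⟩
  · intro j; dsimp only; split_ifs
    · exact deg _
    · simpa
  · intro j; dsimp only; split_ifs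
    · exact deg _
    · simpa
  · by_contra! hcon
    apply hv0
    funext j
    have := hcon j j.2
    simp only [j.2, dif_pos, Fin.eta] at this
    exact Prod.ext (Subtype.ext this.1) (Subtype.ext this.2)
  · intro k hk
    have hsig : ∑ j ∈ Finset.range J,
        (twist f l k (if h : j < J then ((v ⟨j, h⟩).1 : (ZMod p)[X]) else 0) +
          C b * twist f (l + c) k (if h : j < J then ((v ⟨j, h⟩).2 : (ZMod p)[X]) else 0)) * X ^ j
        = sig ⟨k, hk⟩ v := by
      rw [Finset.sum_range]
      simp [sig, LinearMap.sum_apply]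
      rfl
    rw [hsig]
    have hdeg : (sig ⟨k, hk⟩ v).natDegree < D + J + l * n := by
      rw [← hsig]
      have hkl : k * n ≤ l * n := Nat.mul_le_mul_right _ hk.le
      have : ∀ q : degreeLT (ZMod p) D, ∀ N, (twist f N k q).natDegree ≤ (D - 1) + l * n := by
        intro q N
        have h1 := natDegree_twist f N k n hn q
        have h2 := deg q
        omega
      refine lt_of_le_of_lt (natDegree_sum_le_of_forall_le (n := (D - 1) + l * n + J) _ _ ?_) (by omega)
      intro j hj
      have hj := Finset.mem_range.mp hj
      simp only [hj, dif_pos]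
      refine le_trans natDegree_mul_le ?_
      rw [natDegree_X_pow]
      refine Nat.add_le_add ?_ hj.le
      refine natDegree_add_le_of_degree_le (this _ _) ?_
      exact le_trans (natDegree_C_mul_le _ _) (this _ _)
    ext i
    rw [coeff_zero]
    by_cases hi : i < D + J + l * n
    · have := congrFun (congrFun (LinearMap.mem_ker.mp hv) ⟨k, hk⟩) ⟨i, hi⟩
      simpa [Φ] using this
    · exact coeff_eq_zero_of_natDegree_lt (by omega)

theorem stepanov {f : (ZMod p)[X]} {a : ZMod p} {c n D J l : ℕ} (hp : 2 * c + 1 = p)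
    (hf : Odd (rootMultiplicity a f)) (hf0 : f.coeff 0 ≠ 0) (hn : f.natDegree ≤ n)
    (hD : 2 * D + n < p + 2) (hl0 : 0 < l) (hlp : l ≤ p)
    (hlt : l * (D + J + l * n) < 2 * D * J) (b : ZMod p) :
    l * (Finset.univ.filter fun x : ZMod p => f.eval x ^ c = b).card
      ≤ l * n + c * n + D + J * p := by
  obtain ⟨r, s, hr, hs, ⟨j0, hj0, hne⟩, hsig⟩ := exists_aux f c n D J l b hn hlt
  set R : (ZMod p)[X] := ∑ j ∈ Finset.range J,
    (f ^ l * r j * X ^ (j * p) + f ^ (l + c) * s j * X ^ (j * p)) with hR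
  have hfne : f ≠ 0 := by rintro rfl; simp at hf0
  have hR0 : R ≠ 0 := by
    intro h
    have e : R = f ^ l * ∑ j ∈ Finset.range J, (r j + s j * f ^ c) * X ^ (j * p) := by
      rw [hR, Finset.mul_sum]
      refine Finset.sum_congr rfl fun j _ => ?_
      rw [pow_add]; ring
    rw [e] at h
    have h2 := (mul_eq_zero.mp h).resolve_left (pow_ne_zero _ hfne)
    exact hne (nonvanish hp hf hf0 hn hD J r s (fun j _ => hr j) (fun j _ => hs j) h2 j0 hj0)
  have hdeg : R.natDegree ≤ l * n + c * n + D + J * p := by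
    refine natDegree_sum_le_of_forall_le _ _ ?_
    intro j hj
    have hj := Finset.mem_range.mp hj
    have hjp : j * p ≤ J * p := Nat.mul_le_mul_right _ hj.le
    have h1 := hr j
    have h2 := hs j
    have h3 : l * f.natDegree ≤ l * n := Nat.mul_le_mul_left _ hn
    have h4 : c * f.natDegree ≤ c * n := Nat.mul_le_mul_left _ hn
    refine natDegree_add_le_of_degree_le ?_ ?_
    · refine le_trans natDegree_mul_le ?_
      rw [natDegree_X_pow]
      have := natDegree_mul_le (p := f ^ l) (q := r j)
      rw [natDegree_pow] at this
      omega
    · refine le_trans natDegree_mul_le ?_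
      rw [natDegree_X_pow]
      have := natDegree_mul_le (p := f ^ (l + c)) (q := s j)
      rw [natDegree_pow, add_mul] at this
      omega
  have hroot : ∀ x : ZMod p, f.eval x ^ c = b → (X - C x) ^ l ∣ R := by
    intro x hx
    rw [← le_rootMultiplicity_iff hR0]
    obtain ⟨l', rfl⟩ : ∃ l', l = l' + 1 := ⟨l - 1, by omega⟩
    refine lt_rootMultiplicity_of_isRoot_iterate_derivative_of_mem_nonZeroDivisors hR0 ?_ ?_
    · intro k hk
      rw [hR, iterate_derivative_sum, IsRoot, eval_finsetSum]
      have h0 := congrArg (eval x) (hsig k (by omega))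
      rw [eval_finsetSum, eval_zero] at h0
      rw [← mul_zero (f.eval x ^ (l' + 1 - k)), ← h0, Finset.mul_sum]
      refine Finset.sum_congr rfl fun j _ => ?_
      rw [iterate_map_add, iterate_derivative_twist _ _ _ _ (by omega),
        iterate_derivative_twist _ _ _ _ (by omega)]
      have e : l' + 1 + c - k = (l' + 1 - k) + c := by omega
      rw [e, pow_add]
      simp only [eval_add, eval_mul, eval_pow, eval_X, eval_C, hx]
      rw [mul_comm j p, pow_mul, ZMod.pow_card]
      ring
    · rw [mem_nonZeroDivisors_iff_ne_zero, Ne, ZMod.natCast_eq_zero_iff,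
        (Fact.out : p.Prime).dvd_factorial]
      omega
  set S := Finset.univ.filter fun x : ZMod p => f.eval x ^ c = b with hS
  have hdvd : ∏ x ∈ S, (X - C x) ^ l ∣ R := by
    refine Finset.prod_dvd_of_coprime ?_ ?_
    · intro x _ y _ hxy
      exact IsCoprime.pow (pairwise_coprime_X_sub_C (s := fun x : ZMod p => x) Function.injective_id hxy)
    · intro x hx
      exact hroot x (Finset.mem_filter.mp hx).2
  have := natDegree_le_of_dvd hdvd hR0
  rw [natDegree_prod_of_monic _ _ (fun x _ => (monic_X_sub_C x).pow l)] at this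
  simp only [natDegree_pow, natDegree_X_sub_C, mul_one, Finset.sum_const, smul_eq_mul] at this
  rw [mul_comm]
  omega

end Stepanov

namespace Stepanov
open Polynomial

variable {p : ℕ} [Fact p.Prime]

lemma count_bound {f : (ZMod p)[X]} {a : ZMod p} {n : ℕ} (hn1 : 1 ≤ n) (hp2 : p ≠ 2)
    (hf : Odd (rootMultiplicity a f)) (hf0 : f.coeff 0 ≠ 0) (hn : f.natDegree ≤ n)
    (hsmall : 20 * (n : ℝ) < Real.sqrt p) (b : ZMod p) :
    ((Finset.univ.filter fun x : ZMod p => f.eval x ^ (p / 2) = b).card : ℝ)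
      ≤ p / 2 + 11 * n * Real.sqrt p := by
  have hodd : 2 * (p / 2) + 1 = p := by
    have := (Fact.out : p.Prime).eq_two_or_odd
    omega
  set w := Real.sqrt p with hw
  have hww : w * w = p := Real.mul_self_sqrt (by positivity)
  have hn1' : (1 : ℝ) ≤ n := by exact_mod_cast hn1
  have hpn : 400 * (n * n) < p := by
    have : (400 : ℝ) * (n * n) < p := by rw [← hww]; nlinarith
    exact_mod_cast this
  obtain ⟨t, ht⟩ : ∃ t, t = Nat.sqrt p / 2 := ⟨_, rfl⟩
  have hs1 := Nat.sqrt_le p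
  have hs2 := Nat.sqrt_lt_self (Fact.out : p.Prime).one_lt
  have hs3 : w < 2 * t + 2 := by
    have h1 : w < (Nat.sqrt p : ℝ) + 1 := by
      have := Real.real_sqrt_lt_nat_sqrt_succ (a := p)
      simpa using this
    have h2 : Nat.sqrt p ≤ 2 * t + 1 := by omega
    have h2' : (Nat.sqrt p : ℝ) ≤ 2 * t + 1 := by exact_mod_cast h2
    linarith
  have hs4 : 2 * (t : ℝ) ≤ w := by
    have h1 : (Nat.sqrt p : ℝ) ≤ w := Real.nat_sqrt_le_real_sqrt
    have h2 : 2 * t ≤ Nat.sqrt p := by omega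
    have h2' : 2 * (t : ℝ) ≤ Nat.sqrt p := by exact_mod_cast h2
    linarith
  have ht9 : 9 < t := by
    have : (9 : ℝ) < t := by linarith
    exact_mod_cast this
  have htp : 4 * (t * t) ≤ p := by
    have : 2 * t ≤ Nat.sqrt p := by omega
    nlinarith
  have hnn : n ≤ n * n := Nat.le_mul_self n
  obtain ⟨D, hD⟩ : ∃ D, D = (p - n) / 2 := ⟨_, rfl⟩
  have hDt : t * t ≤ D := by omega
  have hDp : 2 * D ≤ p := by omega
  have key : t * t + 8 * n * t + 2 * (t * t) * n < 8 * n * D := by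
    have h1 : 8 * n * (t * t) ≤ 8 * n * D := Nat.mul_le_mul_left _ hDt
    have h2 : t * t ≤ n * (t * t) := Nat.le_mul_of_pos_left _ hn1
    have h3 : n * t * 9 < n * t * t := Nat.mul_lt_mul_of_pos_left ht9 (by positivity)
    nlinarith
  have main := stepanov (c := p / 2) (n := n) (D := D) (J := t + 8 * n) (l := 2 * t) hodd hf hf0 hn
    (by omega) (by omega) (by omega) (by nlinarith) b
  set N := (Finset.univ.filter fun x : ZMod p => f.eval x ^ (p / 2) = b).card with hN
  have main' : 2 * (t : ℝ) * N ≤ 2 * t * n + ((p / 2 : ℕ) : ℝ) * n + D + (t + 8 * n) * p := by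
    exact_mod_cast main
  have hc : ((p / 2 : ℕ) : ℝ) ≤ (p : ℝ) / 2 := Nat.cast_div_le
  have hDp' : 2 * (D : ℝ) ≤ p := by exact_mod_cast hDp
  by_contra! hcon
  have hp0 : (0 : ℝ) < p := by exact_mod_cast (Fact.out : p.Prime).pos
  have hw20 : 20 < w := by linarith
  have h1 : 2 * (t : ℝ) * (p / 2 + 11 * n * w) < 2 * t * N := by
    apply mul_lt_mul_of_pos_left hcon
    have : (9 : ℝ) < t := by exact_mod_cast ht9
    linarith
  have h2 : ((p / 2 : ℕ) : ℝ) * n ≤ p / 2 * n := by gcongr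
  have h3 : (p : ℝ) ≤ n * p := by nlinarith
  have h4 : 2 * (t : ℝ) * (11 * n * w) < 2 * t * n + 9 * n * p := by nlinarith
  have h5 : 2 * (t : ℝ) * n ≤ w * n := by gcongr
  have h6 : (0.9 * w) * (11 * n * w) ≤ 2 * (t : ℝ) * (11 * n * w) := by
    refine mul_le_mul_of_nonneg_right (by linarith) (by positivity)
  have h7 : (n : ℝ) * p = n * w * w := by rw [← hww]; ring
  have h8 : 20 * (n * w) ≤ n * w * w := by
    have : 0 < n * w := by positivity
    nlinarith
  nlinarith

lemma prod_rootMultiplicity {n : ℕ} (m : Fin n → ZMod p) (a : ZMod p) :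
    rootMultiplicity a (∏ i, (X - C (m i))) = (Finset.univ.filter fun i => m i = a).card := by
  rw [← count_roots, roots_prod _ _ (Finset.prod_ne_zero_iff.mpr fun i _ => X_sub_C_ne_zero _)]
  simp only [roots_X_sub_C, Multiset.bind_singleton]
  rw [Multiset.count_map, Finset.card_def, Finset.filter_val]
  simp only [eq_comm]

lemma charsum_ne {n : ℕ} (hn1 : 1 ≤ n) (hp2 : p ≠ 2) (m : Fin n → ZMod p) (a : ZMod p)
    (hm : ∀ i, m i ≠ 0)
    (hodd : Odd (Finset.univ.filter fun i => m i = a).card)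
    (hsmall : 20 * (n : ℝ) < Real.sqrt p) :
    |∑ x : ZMod p, ∏ i, ((quadraticChar (ZMod p) (x - m i) : ℤ) : ℝ)| ≤ 39 * n * Real.sqrt p := by
  set f : (ZMod p)[X] := ∏ i, (X - C (m i)) with hf
  have hev : ∀ x, f.eval x = ∏ i, (x - m i) := by
    intro x; rw [hf, eval_prod]; simp
  have hprod : ∀ x, ∏ i, ((quadraticChar (ZMod p) (x - m i) : ℤ) : ℝ) =
      ((quadraticChar (ZMod p) (f.eval x) : ℤ) : ℝ) := by
    intro x; rw [hev, map_prod]; push_cast; rfl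
  simp only [hprod]
  have hdeg : f.natDegree ≤ n := by
    rw [hf, natDegree_prod_of_monic _ _ (fun i _ => monic_X_sub_C _)]; simp
  have hmult : Odd (rootMultiplicity a f) := by rw [hf, prod_rootMultiplicity]; exact hodd
  have hcoeff : f.coeff 0 ≠ 0 := by
    rw [coeff_zero_eq_eval_zero, hev, Finset.prod_ne_zero_iff]
    intro i _
    simpa using hm i
  have hzero : (Finset.univ.filter fun x : ZMod p => f.eval x = 0).card ≤ n := by
    refine le_trans (Finset.card_le_card (t := Finset.univ.image m) ?_)
      (le_trans Finset.card_image_le (by simp))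
    intro x hx
    have := (Finset.mem_filter.mp hx).2
    rw [hev, Finset.prod_eq_zero_iff] at this
    obtain ⟨i, _, hi⟩ := this
    exact Finset.mem_image.mpr ⟨i, Finset.mem_univ _, (sub_eq_zero.mp hi).symm⟩
  have hchar : ringChar (ZMod p) ≠ 2 := by rwa [ZMod.ringChar_zmod_n]
  have hpow : ∀ y : ZMod p, ((quadraticChar (ZMod p) y : ℤ) : ZMod p) = y ^ (p / 2) := by
    intro y
    have := quadraticChar_eq_pow_of_char_ne_two' hchar y
    rwa [ZMod.card] at this
  have hzero' : ((Finset.univ.filter fun x : ZMod p => f.eval x = 0).card : ℝ) ≤ n := by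
    exact_mod_cast hzero
  have bound : ∀ ε : ℤ, ε = 1 ∨ ε = -1 →
      (p : ℝ) + ε * ∑ x : ZMod p, ((quadraticChar (ZMod p) (f.eval x) : ℤ) : ℝ)
        ≤ 2 * (p / 2 + 11 * n * Real.sqrt p) + n := by
    intro ε hε
    have hN := count_bound hn1 hp2 hmult hcoeff hdeg hsmall (ε : ZMod p)
    have e1 : (p : ℝ) + ε * ∑ x : ZMod p, ((quadraticChar (ZMod p) (f.eval x) : ℤ) : ℝ) =
        ∑ x : ZMod p, (1 + ε * ((quadraticChar (ZMod p) (f.eval x) : ℤ) : ℝ)) := by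
      rw [Finset.sum_add_distrib, Finset.mul_sum]
      simp [ZMod.card]
    have e2 : ∑ x : ZMod p, (1 + ε * ((quadraticChar (ZMod p) (f.eval x) : ℤ) : ℝ)) ≤
        ∑ x : ZMod p, (2 * (if f.eval x ^ (p / 2) = (ε : ZMod p) then (1 : ℝ) else 0) +
          (if f.eval x = 0 then (1 : ℝ) else 0)) := by
      refine Finset.sum_le_sum fun x _ => ?_
      have hp' := hpow (f.eval x)
      by_cases h0 : f.eval x = 0
      · rw [h0, quadraticChar_zero]
        simp
        split_ifs <;> norm_num
      · rw [if_neg h0]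
        rcases quadraticChar_dichotomy h0 with h | h <;> rcases hε with rfl | rfl <;>
          rw [h] at hp' ⊢ <;> rw [← hp'] <;> norm_num <;> split_ifs <;> norm_num
    rw [← e1, Finset.sum_add_distrib, ← Finset.mul_sum, Finset.sum_boole, Finset.sum_boole] at e2
    linarith
  have b1 := bound 1 (Or.inl rfl)
  have b2 := bound (-1) (Or.inr rfl)
  push_cast at b1 b2
  have hw1 : 1 ≤ Real.sqrt p := by
    have : (1 : ℝ) ≤ n := by exact_mod_cast hn1
    linarith
  have hnw : (n : ℝ) ≤ n * Real.sqrt p := by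
    have : (1 : ℝ) ≤ n := by exact_mod_cast hn1
    nlinarith
  rw [abs_le]
  constructor <;> nlinarith

lemma charsum {n : ℕ} (hn1 : 1 ≤ n) (hp2 : p ≠ 2) (m : Fin n → ZMod p) (a : ZMod p)
    (hodd : Odd (Finset.univ.filter fun i => m i = a).card)
    (hsmall : 20 * (n : ℝ) < Real.sqrt p) :
    |∑ x : ZMod p, ∏ i, ((quadraticChar (ZMod p) (x - m i) : ℤ) : ℝ)| ≤ 39 * n * Real.sqrt p := by
  obtain ⟨b, hb⟩ : ∃ b : ZMod p, ∀ i, m i ≠ b := by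
    by_contra! hcon
    have h1 := Fintype.card_le_of_surjective m hcon
    rw [ZMod.card, Fintype.card_fin] at h1
    have h1' : (p : ℝ) ≤ n := by exact_mod_cast h1
    have h2 : (1 : ℝ) ≤ n := by exact_mod_cast hn1
    have h3 : Real.sqrt p * Real.sqrt p = p := Real.mul_self_sqrt (by positivity)
    nlinarith
  have := charsum_ne hn1 hp2 (fun i => m i - b) (a - b) (fun i => sub_ne_zero.mpr (hb i))
    (by simpa using hodd) hsmall
  have e : ∑ x : ZMod p, ∏ i, ((quadraticChar (ZMod p) (x - m i) : ℤ) : ℝ) =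
      ∑ x : ZMod p, ∏ i, ((quadraticChar (ZMod p) (x - (m i - b)) : ℤ) : ℝ) := by
    rw [← Equiv.sum_comp (Equiv.addRight b)]
    refine Finset.sum_congr rfl fun x _ => Finset.prod_congr rfl fun i _ => ?_
    simp only [Equiv.coe_addRight]
    rw [show x + b - m i = x - (m i - b) by ring]
  rw [e]
  exact this

lemma evensum {n : ℕ} (m : Fin n → ZMod p)
    (heven : ∀ a, Even (Finset.univ.filter fun i => m i = a).card) :
    |∑ x : ZMod p, ∏ i, ((quadraticChar (ZMod p) (x - m i) : ℤ) : ℝ) - p| ≤ n := by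
  have e : ∑ x : ZMod p, ∏ i, ((quadraticChar (ZMod p) (x - m i) : ℤ) : ℝ) - p =
      ∑ x : ZMod p, (∏ i, ((quadraticChar (ZMod p) (x - m i) : ℤ) : ℝ) - 1) := by
    rw [Finset.sum_sub_distrib]; simp [ZMod.card]
  rw [e]
  refine le_trans (Finset.abs_sum_le_sum_abs _ _) ?_
  have h : ∀ x : ZMod p, |∏ i, ((quadraticChar (ZMod p) (x - m i) : ℤ) : ℝ) - 1| ≤
      if x ∈ Finset.univ.image m then (1 : ℝ) else 0 := by
    intro x
    split_ifs with hx
    · obtain ⟨i, _, hi⟩ := Finset.mem_image.mp hx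
      rw [Finset.prod_eq_zero (Finset.mem_univ i)]
      · simp
      · rw [hi, sub_self, quadraticChar_zero]; simp
    · rw [Finset.prod_comp (fun b => ((quadraticChar (ZMod p) (x - b) : ℤ) : ℝ)) m,
        Finset.prod_eq_one, sub_self, abs_zero]
      intro b hb
      have hne : x - b ≠ 0 := by
        intro h0
        rw [sub_eq_zero.mp h0] at hx
        exact hx hb
      obtain ⟨k, hk⟩ := heven b
      have hk' : (Finset.univ.filter fun i => m i = b).card = 2 * k := by omega
      rw [hk', pow_mul]
      rcases quadraticChar_dichotomy hne with h | h <;> rw [h] <;> simp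
  refine le_trans (Finset.sum_le_sum fun x _ => h x) ?_
  rw [Finset.sum_boole]
  have : (Finset.univ.filter fun x => x ∈ Finset.univ.image m).card ≤ n := by
    rw [Finset.filter_mem_eq_inter, Finset.univ_inter]
    exact le_trans Finset.card_image_le (by simp)
  exact_mod_cast this

lemma sum_eq {n : ℕ} (m : Fin n → ℤ) :
    ∑ k ∈ Finset.range p, ∏ i, (jacobiSym ((k : ℤ) - m i) p : ℝ) =
      ∑ x : ZMod p, ∏ i, ((quadraticChar (ZMod p) (x - (m i : ZMod p)) : ℤ) : ℝ) := by
  refine Finset.sum_nbij' (fun k => (k : ZMod p)) (fun x => x.val) ?_ ?_ ?_ ?_ ?_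
  · intro k _; exact Finset.mem_univ _
  · intro x _; exact Finset.mem_range.mpr (ZMod.val_lt x)
  · intro k hk; exact ZMod.val_cast_of_lt (Finset.mem_range.mp hk)
  · intro x _; exact ZMod.natCast_zmod_val x
  · intro k _
    refine Finset.prod_congr rfl fun i _ => ?_
    rw [← jacobiSym.legendreSym.to_jacobiSym, legendreSym]
    push_cast
    rfl

lemma cast_inj {n : ℕ} (m : Fin n → ℤ) (hm : ∀ i, |m i| ≤ ((p : ℤ) - 1) / 2) (i j : Fin n) :
    (m i : ZMod p) = (m j : ZMod p) ↔ m i = m j := by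
  refine ⟨fun h => ?_, fun h => by rw [h]⟩
  rw [ZMod.intCast_eq_intCast_iff_dvd_sub] at h
  have h1 := abs_le.mp (hm i)
  have h2 := abs_le.mp (hm j)
  have hp : 0 < p := (Fact.out : p.Prime).pos
  have := Int.eq_zero_of_abs_lt_dvd h (by rw [abs_lt]; constructor <;> omega)
  omega

lemma filter_cast {n : ℕ} (m : Fin n → ℤ) (hm : ∀ i, |m i| ≤ ((p : ℤ) - 1) / 2) (j : Fin n) :
    (Finset.univ.filter fun i => (m i : ZMod p) = (m j : ZMod p)) =
      Finset.univ.filter fun i => m i = m j := by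
  ext i; simp [cast_inj m hm]

end Stepanov

/-- Weil-type bound: for every prime `p`, `n ≥ 1` and integers
`m₁, …, mₙ` with `|mᵢ| ≤ (p-1)/2`, the average `(1/p) ∑_{k<p} ∏ᵢ ((k-mᵢ)/p)` is within
`C n/√p` of `δ`, where `δ = 1` if every integer occurs an even number of times among the
`mᵢ`, and `δ = 0` otherwise. -/
theorem weil_bound_shifted_legendre :
    ∃ C : ℝ, 0 < C ∧ ∀ p : ℕ, p.Prime → ∀ n : ℕ, 1 ≤ n → ∀ m : Fin n → ℤ,
      (∀ i, |m i| ≤ ((p : ℤ) - 1) / 2) →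
      |(∑ k ∈ Finset.range p, ∏ i, (jacobiSym ((k : ℤ) - m i) p : ℝ)) / (p : ℝ) -
          (if ∀ a : ℤ, Even (Finset.univ.filter fun i => m i = a).card then (1 : ℝ) else 0)|
        ≤ C * n / Real.sqrt p := by
  refine ⟨40, by norm_num, ?_⟩
  intro p hp n hn m hm
  have : Fact p.Prime := ⟨hp⟩
  have hp0 : (0 : ℝ) < p := by exact_mod_cast hp.pos
  have hp1 : (1 : ℝ) ≤ p := by exact_mod_cast hp.one_le
  have hn' : (1 : ℝ) ≤ n := by exact_mod_cast hn
  obtain ⟨w, hw⟩ : ∃ w, w = Real.sqrt p := ⟨_, rfl⟩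
  have hw0 : 0 < w := by rw [hw]; exact Real.sqrt_pos.mpr hp0
  have hww : w * w = p := by rw [hw]; exact Real.mul_self_sqrt hp0.le
  have hw1 : 1 ≤ w := by nlinarith
  have reduce : ∀ S d : ℝ, |S - d * p| ≤ 40 * n * w → |S / p - d| ≤ 40 * n / w := by
    intro S d h
    have e : S / p - d = (S - d * p) / p := by field_simp
    rw [e, abs_div, abs_of_pos hp0, div_le_div_iff₀ hp0 hw0, ← hww]
    rw [← hww] at h
    nlinarith
  rw [← hw]
  apply reduce
  rw [Stepanov.sum_eq]
  split_ifs with hev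
  · have := Stepanov.evensum (p := p) (fun i => (m i : ZMod p)) (by
      intro a
      by_cases ha : ∃ j, (m j : ZMod p) = a
      · obtain ⟨j, rfl⟩ := ha
        rw [Stepanov.filter_cast m hm]
        exact hev _
      · push Not at ha
        rw [Finset.filter_false_of_mem (fun i _ => ha i)]
        simp)
    rw [one_mul]
    refine this.trans ?_
    nlinarith
  · push Not at hev
    obtain ⟨a, ha⟩ := hev
    rw [Nat.not_even_iff_odd] at ha
    obtain ⟨j, hj⟩ := Finset.card_pos.mp ha.pos
    have hj := (Finset.mem_filter.mp hj).2
    subst hj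
    rw [zero_mul, sub_zero]
    by_cases hsmall : 20 * (n : ℝ) < w
    · have hp2 : p ≠ 2 := by
        rintro rfl
        push_cast at hww
        nlinarith
      have := Stepanov.charsum hn hp2 (fun i => (m i : ZMod p)) (m j : ZMod p)
        (by rw [Stepanov.filter_cast m hm]; exact ha) (by rw [← hw]; exact hsmall)
      rw [← hw] at this
      refine this.trans ?_
      nlinarith
    · have triv : |∑ x : ZMod p, ∏ i, ((quadraticChar (ZMod p) (x - (m i : ZMod p)) : ℤ) : ℝ)| ≤ p := by
        refine le_trans (Finset.abs_sum_le_sum_abs _ _) ?_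
        have : ∀ x : ZMod p, |∏ i, ((quadraticChar (ZMod p) (x - (m i : ZMod p)) : ℤ) : ℝ)| ≤ 1 := by
          intro x
          rw [Finset.abs_prod]
          refine Finset.prod_le_one (fun i _ => abs_nonneg _) fun i _ => ?_
          by_cases h0 : x - (m i : ZMod p) = 0
          · rw [h0, quadraticChar_zero]; simp
          · rcases quadraticChar_dichotomy h0 with h | h <;> rw [h] <;> simp
        refine le_trans (Finset.sum_le_sum fun x _ => this x) ?_
        simp [ZMod.card]
      refine triv.trans ?_
      push Not at hsmall
      rw [← hww]
      nlinarith

end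
end

section
/- Let M \ge 2 be an integer and let \delta_m \in \{-1, 1\} be an arbitrary choice of signs for the integers m with m \ne 0, m \ne -1 and |m| \le M. Then the function h(t) = 1/t - 1/(1-t) + \sum_{m \ne 0,-1, |m| \le M} \delta_m/(m+t) satisfies h'(t) \le -8 + 2\zeta(2) < 0 for every t \in (0,1), where \zeta is the Riemann zeta function. -/
open scoped Classical

noncomputable section

theorem aux_sum_s19 (T : Finset ℤ) (f : ℤ → ℝ) (e : ℤ → ℕ) (he : Set.InjOn e T)
    (hf : ∀ m ∈ T, f m ≤ 1 / ((e m : ℕ) : ℝ) ^ 2) :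
    ∑ m ∈ T, f m ≤ Real.pi ^ 2 / 6 := by
  calc ∑ m ∈ T, f m ≤ ∑ m ∈ T, 1 / ((e m : ℕ) : ℝ) ^ 2 := Finset.sum_le_sum hf
    _ = ∑ n ∈ T.image e, 1 / (n : ℝ) ^ 2 := by
      rw [Finset.sum_image he]
    _ ≤ Real.pi ^ 2 / 6 :=
      sum_le_hasSum _ (fun n _ => by positivity) hasSum_zeta_two

theorem aux_eight (t : ℝ) (h0 : 0 < t) (h1 : t < 1) : 8 ≤ 1 / t ^ 2 + 1 / (1 - t) ^ 2 := by
  have h2 : 0 < 1 - t := by linarith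
  have hp : 0 < t * (1 - t) := mul_pos h0 h2
  have hq : t * (1 - t) ≤ 1 / 4 := by nlinarith [sq_nonneg (2 * t - 1)]
  have : 1 / t ^ 2 + 1 / (1 - t) ^ 2 = (1 - 2 * (t * (1 - t))) / (t * (1 - t)) ^ 2 := by
    field_simp
    ring
  rw [this, le_div_iff₀ (by positivity)]
  nlinarith

/-- For `M ≥ 2` and any signs `δ_m ∈ {±1}` (for `m ≠ 0, -1`, `|m| ≤ M`),
the function `h(t) = 1/t - 1/(1-t) + ∑_{m ≠ 0,-1, |m| ≤ M} δ_m/(m+t)` satisfies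
`h'(t) ≤ -8 + 2ζ(2) < 0` for every `t ∈ (0,1)`, where `ζ(2) = π²/6`. -/
theorem deriv_neg_case (M : ℕ) (hM : 2 ≤ M) (δ : ℤ → ℝ)
    (hδ : ∀ m : ℤ, m ≠ 0 → m ≠ -1 → |m| ≤ (M : ℤ) → δ m = 1 ∨ δ m = -1) :
    ∀ t ∈ Set.Ioo (0 : ℝ) 1,
      deriv (fun u : ℝ => 1 / u - 1 / (1 - u) +
          ∑ m ∈ Finset.Icc (-(M : ℤ)) (M : ℤ) \ {0, -1}, δ m / ((m : ℝ) + u)) t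
        ≤ -8 + 2 * (Real.pi ^ 2 / 6) ∧
      (-8 + 2 * (Real.pi ^ 2 / 6) : ℝ) < 0 := by
  rintro t ⟨h0, h1⟩
  refine ⟨?_, by nlinarith [Real.pi_lt_d2, Real.pi_pos]⟩
  have h2 : 0 < 1 - t := by linarith
  set S := Finset.Icc (-(M : ℤ)) (M : ℤ) \ {0, -1} with hS
  have hmem : ∀ m ∈ S, m ≠ 0 ∧ m ≠ -1 ∧ |m| ≤ (M : ℤ) := by
    intro m hm
    simp only [hS, Finset.mem_sdiff, Finset.mem_Icc, Finset.mem_insert,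
      Finset.mem_singleton, not_or] at hm
    exact ⟨hm.2.1, hm.2.2, abs_le.2 hm.1⟩
  have hcase : ∀ m ∈ S, 0 < m ∨ m ≤ -2 := by
    intro m hm
    have := hmem m hm
    omega
  have hne : ∀ m ∈ S, (m : ℝ) + t ≠ 0 := by
    intro m hm
    rcases hcase m hm with h | h
    · have : (0 : ℝ) < m := by exact_mod_cast h
      linarith
    · have : (m : ℝ) ≤ -2 := by exact_mod_cast h
      linarith
  have hd : HasDerivAt (fun u : ℝ => 1 / u - 1 / (1 - u) + ∑ m ∈ S, δ m / ((m : ℝ) + u))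
      (-(1 / t ^ 2) - 1 / (1 - t) ^ 2 + ∑ m ∈ S, -(δ m / ((m : ℝ) + t) ^ 2)) t := by
    refine HasDerivAt.add (HasDerivAt.sub ?_ ?_) (HasDerivAt.fun_sum ?_)
    · have := (hasDerivAt_const t (1 : ℝ)).fun_div (hasDerivAt_id' t) h0.ne'
      refine this.congr_deriv ?_
      ring
    · have := (hasDerivAt_const t (1 : ℝ)).fun_div ((hasDerivAt_id' t).const_sub 1) h2.ne'
      refine this.congr_deriv ?_
      ring
    · intro m hm
      have := (hasDerivAt_const t (δ m)).fun_div ((hasDerivAt_id' t).const_add (m : ℝ)) (hne m hm)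
      refine this.congr_deriv ?_
      ring
  rw [hd.deriv]
  have hb : ∑ m ∈ S, -(δ m / ((m : ℝ) + t) ^ 2) ≤ ∑ m ∈ S, 1 / ((m : ℝ) + t) ^ 2 := by
    refine Finset.sum_le_sum fun m hm => ?_
    have hp : 0 ≤ 1 / ((m : ℝ) + t) ^ 2 := by positivity
    obtain ⟨ha, hb, hc⟩ := hmem m hm
    rcases hδ m ha hb hc with h | h
    · rw [h]; linarith
    · rw [h, neg_div, neg_neg]
  have hs := Finset.sum_filter_add_sum_filter_not S (fun m => 0 < m)
    (fun m : ℤ => 1 / ((m : ℝ) + t) ^ 2)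
  have hpos : ∑ m ∈ S with 0 < m, 1 / ((m : ℝ) + t) ^ 2 ≤ Real.pi ^ 2 / 6 := by
    refine aux_sum_s19 _ _ (fun m => m.toNat) ?_ ?_
    · intro a ha b hb hab
      simp only [Finset.coe_filter, Set.mem_ofPred_eq] at ha hb hab
      omega
    · intro m hm
      have hm0 := (Finset.mem_filter.1 hm).2
      have hc : ((m.toNat : ℕ) : ℝ) = (m : ℝ) := by
        exact_mod_cast Int.toNat_of_nonneg hm0.le
      have : (0 : ℝ) < m := by exact_mod_cast hm0
      simp only [hc]
      gcongr
      linarith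
  have hneg : ∑ m ∈ S with ¬ 0 < m, 1 / ((m : ℝ) + t) ^ 2 ≤ Real.pi ^ 2 / 6 := by
    refine aux_sum_s19 _ _ (fun m => (-m - 1).toNat) ?_ ?_
    · intro a ha b hb hab
      simp only [Finset.coe_filter, Set.mem_ofPred_eq] at ha hb hab
      have := hcase a ha.1
      have := hcase b hb.1
      omega
    · intro m hm
      have hm0 : m ≤ -2 := (hcase m (Finset.mem_filter.1 hm).1).resolve_left
        (Finset.mem_filter.1 hm).2
      have hc : (((-m - 1).toNat : ℕ) : ℝ) = -(m : ℝ) - 1 := by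
        have : (((-m - 1).toNat : ℕ) : ℤ) = -m - 1 := Int.toNat_of_nonneg (by omega)
        exact_mod_cast this
      have : (m : ℝ) ≤ -2 := by exact_mod_cast hm0
      simp only [hc]
      apply one_div_le_one_div_of_le
      · have : 0 < -(m : ℝ) - 1 := by linarith
        positivity
      · nlinarith
  have := aux_eight t h0 h1
  linarith

end
end
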